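/- Let n ≥ 2, p ≥ 1, and let f, g : S^{n-1} → [0,∞) be integrable with respect to the rotation invariant probability measure du on S^{n-1}. Then ∫_{S^{n-1}} ∫_{S^{n-1}} [u,v]^p f(u) g(v) du dv ≥ ((n−1)ω_{n−1}ω_{n+p−2} / (n ω_n ω_{n+p−3})) · ‖f‖_{n/(n+p)} ‖g‖_{n/(n+p)}, where ‖f‖_q = (∫_{S^{n-1}} f(u)^q du)^{1/q}. -/

import Mathlib

/-!
Write `G(x) = ∫ [x,v]^p g(v) dv` for the sine transform of `g`, so that the double integral is
`∫ f G`. The claim is deduced from the following geometric inequality: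
among convex bodies `K`, `L` of given volumes, the energy `∫_K ∫_L [x,y]^p dy dx` is smallest when
both are centred balls (`exists_ball_sineEnergy_le`).

The energy does not increase under simultaneous Steiner symmetrization of `K` and `L` in a
direction `u` (`sineEnergy_steiner_le`). Indeed `[x,y]` is the norm of `x ∧ y` up to a factor, and
for displacements parallel to `u` the quadratic term of `(x + su) ∧ (y + tu)` vanishes, so the
kernel is jointly convex in `(s, t)`; it is also even under reflection in `u^⊥`. Hence centring two
parallel chords lowers their mutual energy. Existence of optimal balls comes from compactness: the
convex bodies in a fixed ball are compact in the Hausdorff metric, volume, energy and second moment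
are continuous on them, and a pair of least second moment among the admissible pairs must be
reflection symmetric in all hyperplanes through the origin, since a Steiner symmetrization strictly
lowers the second moment of any other body.

To pass to densities, let `K = {G ≤ 1}`, a convex body with radial function `G^{-1/p}`, let `F` be
the sine transform of `G^{-(n+p)/p}`, and let `L = {F ≤ 1}`. In polar coordinates the volumes of
`K` and `L` are multiples of `∫ G^{-n/p}` and `∫ F^{-n/p}`, and their energy is a multiple of
`∫ F · F^{-(n+p)/p} = ∫ F^{-n/p}`. So if `r` and `s` are the radii of the balls with the volumes of
`K` and `L`, the comparison with balls reads `c r^{n+p} s^p ≤ 1`, where `c` is the sine transform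
of the constant `1` on the sphere. Hölder's inequality in the form
`‖f‖_q ≤ (∫ f G) (∫ G^{-n/p})^{p/n}`, with `q = n/(n+p)`, gives `‖f‖_q ≤ (∫ f G) r^p`; applied to
`g` and `F`, with `∫ g F = ∫ G · G^{-(n+p)/p} = r^n`, it gives `‖g‖_q ≤ r^n s^p`
(`exists_radii`). Multiplying these three bounds proves `c ‖f‖_q ‖g‖_q ≤ ∫ f G`. Finally `c` is
computed by integrating `[x,e]^p` against a Gaussian (`sineTrans_one`).
-/

open MeasureTheory Metric Set
open scoped RealInnerProductSpace ENNReal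

noncomputable section

/-- `[x,y]`: the area of the parallelogram spanned by `x` and `y`. -/
def sinePair {n : ℕ} (x y : EuclideanSpace ℝ (Fin n)) : ℝ :=
  Real.sqrt (‖x‖ ^ 2 * ‖y‖ ^ 2 - ⟪x, y⟫ ^ 2)

/-- `ω_q = π^{q/2}/Γ(1+q/2)`. -/
def omegaVol (q : ℝ) : ℝ := Real.pi ^ (q / 2) / Real.Gamma (1 + q / 2)

/-- The rotation invariant probability measure on the unit sphere `S^{n-1}`. -/
def sphereProb (n : ℕ) : Measure (sphere (0 : EuclideanSpace ℝ (Fin n)) 1) :=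
  ((volume : Measure (EuclideanSpace ℝ (Fin n))).toSphere univ)⁻¹ •
    (volume : Measure (EuclideanSpace ℝ (Fin n))).toSphere

/-- The radial function of a set star-shaped about the origin. -/
def radialFn {n : ℕ} (K : Set (EuclideanSpace ℝ (Fin n))) (u : EuclideanSpace ℝ (Fin n)) : ℝ :=
  sSup {r : ℝ | 0 ≤ r ∧ r • u ∈ K}

/-- `K` is star-shaped about the origin. -/
def IsStarShaped {n : ℕ} (K : Set (EuclideanSpace ℝ (Fin n))) : Prop :=
  0 ∈ K ∧ ∀ x ∈ K, ∀ t : ℝ, 0 ≤ t → t ≤ 1 → t • x ∈ K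

/-- `K` is a star body: star-shaped about the origin, with radial function positive and
continuous on the unit sphere, and `K = {r • u : u ∈ S^{n-1}, 0 ≤ r ≤ ρ_K(u)}`. -/
def IsStarBody {n : ℕ} (K : Set (EuclideanSpace ℝ (Fin n))) : Prop :=
  IsStarShaped K ∧
  (∀ u ∈ sphere (0 : EuclideanSpace ℝ (Fin n)) 1, 0 < radialFn K u) ∧
  ContinuousOn (radialFn K) (sphere (0 : EuclideanSpace ℝ (Fin n)) 1) ∧
  ∀ u ∈ sphere (0 : EuclideanSpace ℝ (Fin n)) 1, ∀ r : ℝ, 0 ≤ r →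
    (r • u ∈ K ↔ r ≤ radialFn K u)

/-- The constant `c̃_{n,p}`. -/
def tildeC (n : ℕ) (p : ℝ) : ℝ :=
  ((n : ℝ) - 1) * omegaVol ((n : ℝ) - 1) * omegaVol ((n : ℝ) + p - 2) /
    (((n : ℝ) + p) * omegaVol (n : ℝ) * omegaVol ((n : ℝ) + p - 3))

/-- The polar body `Λ_p°K` of the `L_p`-sine centroid body of `K`. -/
def sineCentroidPolar (n : ℕ) (p : ℝ) (K : Set (EuclideanSpace ℝ (Fin n))) :
    Set (EuclideanSpace ℝ (Fin n)) :=
  {x | ∫ y in K, sinePair x y ^ p ≤ tildeC n p * (volume K).toReal}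

/-- The sine polar body `K^◇`. -/
def sinePolar {n : ℕ} (K : Set (EuclideanSpace ℝ (Fin n))) : Set (EuclideanSpace ℝ (Fin n)) :=
  {x | ∀ y ∈ K, sinePair x y ≤ 1}

/-- The closed solid cylinder `C⁻(u,r)`. -/
def solidCylinder {n : ℕ} (u : EuclideanSpace ℝ (Fin n)) (r : ℝ) :
    Set (EuclideanSpace ℝ (Fin n)) := {x | sinePair x u ≤ r}

/-- `K ∈ C_e^n`: an origin-symmetric convex body that is an intersection of closed solid
cylinders. -/
def IsCylBody {n : ℕ} (K : Set (EuclideanSpace ℝ (Fin n))) : Prop :=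
  IsCompact K ∧ Convex ℝ K ∧ (interior K).Nonempty ∧ (∀ x ∈ K, -x ∈ K) ∧
  ∃ I : Set (EuclideanSpace ℝ (Fin n) × ℝ),
    (∀ c ∈ I, c.1 ∈ sphere (0 : EuclideanSpace ℝ (Fin n)) 1 ∧ 0 < c.2) ∧
    K = ⋂ c ∈ I, solidCylinder c.1 c.2

/-- The cylindrical hull of a set. -/
def cylHull {n : ℕ} (E : Set (EuclideanSpace ℝ (Fin n))) : Set (EuclideanSpace ℝ (Fin n)) :=
  ⋂ c ∈ {c : EuclideanSpace ℝ (Fin n) × ℝ |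
      c.1 ∈ sphere (0 : EuclideanSpace ℝ (Fin n)) 1 ∧ 0 < c.2 ∧ E ⊆ solidCylinder c.1 c.2},
    solidCylinder c.1 c.2

/-- The cylindrical support function `c_K`. -/
def cylSupport {n : ℕ} (K : Set (EuclideanSpace ℝ (Fin n))) (x : EuclideanSpace ℝ (Fin n)) : ℝ :=
  sSup ((fun y => sinePair x y) '' K)

/-- The support function `h_K`. -/
def suppFn {n : ℕ} (K : Set (EuclideanSpace ℝ (Fin n))) (x : EuclideanSpace ℝ (Fin n)) : ℝ :=
  sSup ((fun y => ⟪x, y⟫) '' K)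

section
variable {n : ℕ}

/-! ### The area kernel -/

/-- The exterior product `x ∧ y`, encoded as the antisymmetric matrix `(xᵢ yⱼ - xⱼ yᵢ)`. -/
def wedge (x y : EuclideanSpace ℝ (Fin n)) : EuclideanSpace ℝ (Fin n × Fin n) :=
  WithLp.toLp 2 fun ij => x ij.1 * y ij.2 - x ij.2 * y ij.1

lemma sinePair_nonneg (x y : EuclideanSpace ℝ (Fin n)) : 0 ≤ sinePair x y := Real.sqrt_nonneg _

lemma sinePair_sq (x y : EuclideanSpace ℝ (Fin n)) :
    sinePair x y ^ 2 = ‖x‖ ^ 2 * ‖y‖ ^ 2 - ⟪x, y⟫ ^ 2 := by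
  apply Real.sq_sqrt
  have h := abs_real_inner_le_norm x y
  have := sq_le_sq' (by linarith [neg_abs_le ⟪x, y⟫, norm_nonneg x, norm_nonneg y, abs_nonneg ⟪x,y⟫])
    ((le_abs_self _).trans h)
  nlinarith

lemma norm_wedge (x y : EuclideanSpace ℝ (Fin n)) : ‖wedge x y‖ = Real.sqrt 2 * sinePair x y := by
  rw [sinePair, ← Real.sqrt_mul (by norm_num), EuclideanSpace.norm_eq]
  congr 1
  have hx : ‖x‖ ^ 2 = ∑ i, x i ^ 2 := by simp [EuclideanSpace.norm_sq_eq]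
  have hy : ‖y‖ ^ 2 = ∑ i, y i ^ 2 := by simp [EuclideanSpace.norm_sq_eq]
  have hi : ⟪x, y⟫ = ∑ i, x i * y i := by
    simp [PiLp.inner_apply, mul_comm]
  rw [hx, hy, hi, Fintype.sum_prod_type]
  have : ∀ i j, ‖wedge x y (i, j)‖ ^ 2
      = x i ^ 2 * y j ^ 2 + x j ^ 2 * y i ^ 2 - 2 * ((x i * y i) * (x j * y j)) := by
    intro i j
    simp only [wedge, Real.norm_eq_abs, sq_abs]
    ring
  simp only [this, Finset.sum_sub_distrib, Finset.sum_add_distrib, ← Finset.mul_sum,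
    ← Finset.sum_mul]
  ring

/-- The identity through which the triangle inequality for norms acts on `[x, y]`. -/
lemma sinePair_eq_norm (x y : EuclideanSpace ℝ (Fin n)) :
    sinePair x y = ‖wedge x y‖ / Real.sqrt 2 := by
  rw [norm_wedge]; field_simp

lemma continuous_sinePair :
    Continuous fun q : EuclideanSpace ℝ (Fin n) × EuclideanSpace ℝ (Fin n) => sinePair q.1 q.2 := by
  unfold sinePair
  fun_prop

lemma sinePair_comm (x y : EuclideanSpace ℝ (Fin n)) : sinePair x y = sinePair y x := by
  unfold sinePair
  rw [real_inner_comm, mul_comm]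

lemma sinePair_smul_left (r : ℝ) (x y : EuclideanSpace ℝ (Fin n)) :
    sinePair (r • x) y = |r| * sinePair x y := by
  unfold sinePair
  rw [← Real.sqrt_sq_eq_abs, ← Real.sqrt_mul (sq_nonneg r), norm_smul, real_inner_smul_left,
    mul_pow, mul_pow, Real.norm_eq_abs, sq_abs]
  congr 1; ring

lemma sinePair_map (T : EuclideanSpace ℝ (Fin n) ≃ₗᵢ[ℝ] EuclideanSpace ℝ (Fin n))
    (x y : EuclideanSpace ℝ (Fin n)) : sinePair (T x) (T y) = sinePair x y := by
  simp [sinePair]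

lemma sinePair_le (x y : EuclideanSpace ℝ (Fin n)) : sinePair x y ≤ ‖x‖ * ‖y‖ := by
  unfold sinePair
  rw [Real.sqrt_le_left (by positivity)]
  nlinarith [sq_nonneg ⟪x, y⟫]

lemma sinePair_convex (x z y : EuclideanSpace ℝ (Fin n)) {a b : ℝ} (ha : 0 ≤ a) (hb : 0 ≤ b) :
    sinePair (a • x + b • z) y ≤ a * sinePair x y + b * sinePair z y := by
  have h : wedge (a • x + b • z) y = a • wedge x y + b • wedge z y := by
    ext ij
    simp [wedge]
    ring
  have h2 := norm_add_le (a • wedge x y) (b • wedge z y)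
  rw [← h, norm_smul, norm_smul, norm_wedge, norm_wedge, norm_wedge, Real.norm_of_nonneg ha,
    Real.norm_of_nonneg hb] at h2
  have : 0 < Real.sqrt 2 := by positivity
  nlinarith

/-- Joint midpoint convexity of `[x, y]` along displacements parallel to one vector `u`: the
cross term of the bilinear map `x ∧ y` is a multiple of `u ∧ u = 0`. -/
lemma sinePair_midpoint (x y u : EuclideanSpace ℝ (Fin n)) (a b : ℝ) :
    2 * sinePair x y ≤ sinePair (x + a • u) (y + b • u) + sinePair (x - a • u) (y - b • u) := by
  have h : (2 : ℝ) • wedge x y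
      = wedge (x + a • u) (y + b • u) + wedge (x - a • u) (y - b • u) := by
    ext ij
    simp [wedge]
    ring
  have h2 := norm_add_le (wedge (x + a • u) (y + b • u)) (wedge (x - a • u) (y - b • u))
  rw [← h, norm_smul, norm_wedge, norm_wedge, norm_wedge, Real.norm_of_nonneg (by norm_num)] at h2
  have : 0 < Real.sqrt 2 := by positivity
  nlinarith

lemma sinePair_rpow_midpoint {p : ℝ} (hp : 1 ≤ p) (x y u : EuclideanSpace ℝ (Fin n)) (a b : ℝ) :
    2 * sinePair x y ^ p ≤
      sinePair (x + a • u) (y + b • u) ^ p + sinePair (x - a • u) (y - b • u) ^ p := by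
  set A := sinePair (x + a • u) (y + b • u)
  set B := sinePair (x - a • u) (y - b • u)
  have hA : 0 ≤ A := sinePair_nonneg _ _
  have hB : 0 ≤ B := sinePair_nonneg _ _
  have h := sinePair_midpoint x y u a b
  have h1 : sinePair x y ≤ (1/2 : ℝ) • A + (1/2 : ℝ) • B := by
    simp only [smul_eq_mul]; change _ ≤ A + B at h; linarith
  have h2 := (convexOn_rpow hp).2 (mem_Ici.2 hA) (mem_Ici.2 hB) (by norm_num : (0:ℝ) ≤ 1/2)
    (by norm_num : (0:ℝ) ≤ 1/2) (by norm_num)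
  have h3 := Real.rpow_le_rpow (sinePair_nonneg x y) h1 (by linarith : 0 ≤ p)
  simp only [smul_eq_mul] at h2 h3
  linarith

/-- The kernel `[x, y] ^ p` as an extended nonnegative real. -/
def sineKer (p : ℝ) (x y : EuclideanSpace ℝ (Fin n)) : ℝ≥0∞ := ENNReal.ofReal (sinePair x y ^ p)

lemma continuous_sinePair_rpow {p : ℝ} (hp : 0 ≤ p) :
    Continuous fun q : EuclideanSpace ℝ (Fin n) × EuclideanSpace ℝ (Fin n) =>
      sinePair q.1 q.2 ^ p :=
  continuous_sinePair.rpow_const fun _ => Or.inr hp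

lemma continuous_sineKer {p : ℝ} (hp : 0 ≤ p) :
    Continuous fun q : EuclideanSpace ℝ (Fin n) × EuclideanSpace ℝ (Fin n) =>
      sineKer p q.1 q.2 :=
  ENNReal.continuous_ofReal.comp (continuous_sinePair_rpow hp)

end

section
variable {n : ℕ}

/-! ### Lines in a fixed direction -/

/-- The orthogonal projection onto `u^⊥`, for a unit vector `u`. -/
def perpProj (u x : EuclideanSpace ℝ (Fin n)) : EuclideanSpace ℝ (Fin n) := x - ⟪x, u⟫ • u

/-- The reflection in the hyperplane `u^⊥`, for a unit vector `u`. -/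
def reflAlong (u x : EuclideanSpace ℝ (Fin n)) : EuclideanSpace ℝ (Fin n) :=
  x - (2 * ⟪x, u⟫) • u

lemma inner_perpProj {u : EuclideanSpace ℝ (Fin n)} (hu : ‖u‖ = 1) (x) :
    ⟪perpProj u x, u⟫ = 0 := by
  simp [perpProj, inner_sub_left, real_inner_smul_left, hu]

lemma continuous_perpProj (u : EuclideanSpace ℝ (Fin n)) : Continuous (perpProj u) := by
  unfold perpProj; fun_prop

lemma continuous_reflAlong (u : EuclideanSpace ℝ (Fin n)) : Continuous (reflAlong u) := by
  unfold reflAlong; fun_prop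

lemma inner_line {u z : EuclideanSpace ℝ (Fin n)} (hu : ‖u‖ = 1) (hz : ⟪z, u⟫ = 0) (s : ℝ) :
    ⟪z + s • u, u⟫ = s := by
  simp [inner_add_left, real_inner_smul_left, hu, hz]

lemma reflAlong_line {u z : EuclideanSpace ℝ (Fin n)} (hu : ‖u‖ = 1) (hz : ⟪z, u⟫ = 0) (s : ℝ) :
    reflAlong u (z + s • u) = z + (-s) • u := by
  rw [reflAlong, inner_line hu hz]; module

lemma perpProj_line {u z : EuclideanSpace ℝ (Fin n)} (hu : ‖u‖ = 1) (hz : ⟪z, u⟫ = 0) (s : ℝ) :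
    perpProj u (z + s • u) = z := by
  rw [perpProj, inner_line hu hz]; module

lemma perpProj_add (u x : EuclideanSpace ℝ (Fin n)) : perpProj u x + ⟪x, u⟫ • u = x := by
  simp [perpProj]

lemma norm_line_sq {u z : EuclideanSpace ℝ (Fin n)} (hu : ‖u‖ = 1) (hz : ⟪z, u⟫ = 0) (s : ℝ) :
    ‖z + s • u‖ ^ 2 = ‖z‖ ^ 2 + s ^ 2 := by
  rw [norm_add_sq_real, real_inner_smul_right, hz, norm_smul, hu]; simp

lemma norm_reflAlong {u : EuclideanSpace ℝ (Fin n)} (hu : ‖u‖ = 1) (x : EuclideanSpace ℝ (Fin n)) :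
    ‖reflAlong u x‖ = ‖x‖ := by
  have h1 := norm_line_sq hu (inner_perpProj hu x) (⟪x, u⟫)
  have h2 := norm_line_sq hu (inner_perpProj hu x) (-⟪x, u⟫)
  rw [← reflAlong_line hu (inner_perpProj hu x)] at h2
  rw [perpProj_add] at h1 h2
  rw [neg_sq] at h2
  rw [← abs_of_nonneg (norm_nonneg x), ← abs_of_nonneg (norm_nonneg (reflAlong u x))]
  exact (sq_eq_sq_iff_abs_eq_abs _ _).1 (h2.trans h1.symm)

lemma reflAlong_reflAlong {u : EuclideanSpace ℝ (Fin n)} (hu : ‖u‖ = 1)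
    (x : EuclideanSpace ℝ (Fin n)) : reflAlong u (reflAlong u x) = x := by
  conv_lhs => rw [← perpProj_add u x]
  rw [reflAlong_line hu (inner_perpProj hu x), reflAlong_line hu (inner_perpProj hu x), neg_neg,
    perpProj_add]

/-- Evenness of the kernel on a pair of parallel lines, by reflection in `u^⊥`. -/
lemma sinePair_line_neg {u z w : EuclideanSpace ℝ (Fin n)} (hu : ‖u‖ = 1) (hz : ⟪z, u⟫ = 0)
    (hw : ⟪w, u⟫ = 0) (s t : ℝ) :
    sinePair (z + (-s) • u) (w + (-t) • u) = sinePair (z + s • u) (w + t • u) := by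
  have hw' : ⟪u, w⟫ = 0 := by rw [real_inner_comm]; exact hw
  unfold sinePair
  congr 1
  rw [norm_line_sq hu hz, norm_line_sq hu hw, norm_line_sq hu hz, norm_line_sq hu hw]
  simp [inner_add_left, inner_add_right,
    real_inner_smul_left, real_inner_smul_right, hz, hw', hu]

/-- The strip `0 ≤ ⟪x, u⟫ ≤ 1`, used to express integrals over the space through integrals over
lines parallel to `u`. -/
def strip (u : EuclideanSpace ℝ (Fin n)) : Set (EuclideanSpace ℝ (Fin n)) :=
  {x | ⟪x, u⟫ ∈ Icc (0 : ℝ) 1}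

lemma measurableSet_strip (u : EuclideanSpace ℝ (Fin n)) : MeasurableSet (strip u) :=
  (isClosed_Icc.preimage (by fun_prop : Continuous fun x : EuclideanSpace ℝ (Fin n) =>
    ⟪x, u⟫)).measurableSet

/-- Fubini's theorem along the direction `u`. Every line parallel to `u` meets the strip in a
segment of length one, so integrating the line integrals over the strip counts every line once. -/
lemma lintegral_strip {u : EuclideanSpace ℝ (Fin n)} (hu : ‖u‖ = 1)
    {F : EuclideanSpace ℝ (Fin n) → ℝ≥0∞} (hF : Measurable F) :
    ∫⁻ x, F x = ∫⁻ x in strip u, ∫⁻ t : ℝ, F (perpProj u x + t • u) := by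
  have hm : Measurable fun q : EuclideanSpace ℝ (Fin n) × ℝ => F (q.1 + q.2 • u) :=
    hF.comp (by fun_prop)
  have h1 : ∀ x, ∫⁻ t : ℝ, F (perpProj u x + t • u) = ∫⁻ t : ℝ, F (x + t • u) := by
    intro x
    rw [← lintegral_add_right_eq_self (fun t : ℝ => F (perpProj u x + t • u)) ⟪x, u⟫]
    congr 1; ext t; congr 1
    rw [perpProj]; module
  simp only [h1]
  rw [← lintegral_indicator (measurableSet_strip u)]
  have h2 : ∀ x, (strip u).indicator (fun x => ∫⁻ t : ℝ, F (x + t • u)) x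
      = ∫⁻ t : ℝ, (strip u).indicator (fun x => F (x + t • u)) x := by
    intro x
    by_cases hx : x ∈ strip u <;> simp [hx]
  simp only [h2]
  have hm2 : Measurable (Function.uncurry fun (x : EuclideanSpace ℝ (Fin n)) (t : ℝ) =>
      (strip u).indicator (fun x => F (x + t • u)) x) := by
    have : (Function.uncurry fun (x : EuclideanSpace ℝ (Fin n)) (t : ℝ) =>
      (strip u).indicator (fun x => F (x + t • u)) x)
      = (Prod.fst ⁻¹' strip u).indicator (fun q => F (q.1 + q.2 • u)) := by
      ext ⟨x, t⟩
      by_cases hx : x ∈ strip u <;> simp [Function.uncurry, hx]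
    rw [this]
    exact hm.indicator (measurable_fst (measurableSet_strip u))
  rw [lintegral_lintegral_swap hm2.aemeasurable]
  have h3 : ∀ t : ℝ, ∫⁻ x, (strip u).indicator (fun x => F (x + t • u)) x
      = ∫⁻ x, (Icc (⟪x, u⟫ - 1) ⟪x, u⟫).indicator (fun _ => F x) t := by
    intro t
    rw [← lintegral_add_right_eq_self _ (-(t • u))]
    congr 1; ext x
    have : x + -(t • u) ∈ strip u ↔ t ∈ Icc (⟪x, u⟫ - 1) ⟪x, u⟫ := by
      simp only [strip, mem_ofPred_eq, mem_Icc, inner_add_left, inner_neg_left,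
        real_inner_smul_left, real_inner_self_eq_norm_sq, hu]
      constructor <;> rintro ⟨h, h'⟩ <;> constructor <;> linarith
    by_cases hx : x + -(t • u) ∈ strip u
    · rw [indicator_of_mem hx, indicator_of_mem (this.1 hx)]; simp
    · rw [indicator_of_notMem hx, indicator_of_notMem (fun h => hx (this.2 h))]
  simp only [h3]
  rw [lintegral_lintegral_swap]
  · congr 1; ext x
    rw [lintegral_indicator measurableSet_Icc]
    simp
  · have : (Function.uncurry fun (t : ℝ) (x : EuclideanSpace ℝ (Fin n)) =>
      (Icc (⟪x, u⟫ - 1) ⟪x, u⟫).indicator (fun _ => F x) t)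
      = {q : ℝ × EuclideanSpace ℝ (Fin n) | ⟪q.2, u⟫ - 1 ≤ q.1 ∧ q.1 ≤ ⟪q.2, u⟫}.indicator
        (fun q => F q.2) := by
      ext ⟨t, x⟩
      simp [Function.uncurry, indicator]
    rw [this]
    refine ((hF.comp measurable_snd).indicator (IsClosed.measurableSet ?_)).aemeasurable
    have hc : Continuous fun q : ℝ × EuclideanSpace ℝ (Fin n) => ⟪q.2, u⟫ := by fun_prop
    exact (isClosed_le (hc.sub continuous_const) continuous_fst).inter
      (isClosed_le continuous_fst hc)

/-! ### Steiner symmetrization -/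

/-- The Steiner symmetral of `K` in the direction `u`: for `K` convex, each chord of `K` parallel
to `u` is translated along its line until its midpoint lies in `u^⊥`. The midpoint of a point of
a chord and the reflection of another point of the same chord sweeps out the translated chord. -/
def steiner (u : EuclideanSpace ℝ (Fin n)) (K : Set (EuclideanSpace ℝ (Fin n))) :
    Set (EuclideanSpace ℝ (Fin n)) :=
  (fun q : EuclideanSpace ℝ (Fin n) × EuclideanSpace ℝ (Fin n) =>
    (1 / 2 : ℝ) • (q.1 + reflAlong u q.2)) '' {q | q ∈ K ×ˢ K ∧ perpProj u q.1 = perpProj u q.2}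

lemma isCompact_steiner (u : EuclideanSpace ℝ (Fin n)) {K : Set (EuclideanSpace ℝ (Fin n))}
    (hK : IsCompact K) : IsCompact (steiner u K) := by
  apply IsCompact.image
  · exact (hK.prod hK).inter_right (isClosed_eq ((continuous_perpProj u).comp continuous_fst)
      ((continuous_perpProj u).comp continuous_snd))
  · have := continuous_reflAlong u
    fun_prop

lemma convex_steiner (u : EuclideanSpace ℝ (Fin n)) {K : Set (EuclideanSpace ℝ (Fin n))}
    (hK : Convex ℝ K) : Convex ℝ (steiner u K) := by
  rintro _ ⟨⟨x, y⟩, ⟨⟨hx, hy⟩, hxy⟩, rfl⟩ _ ⟨⟨x', y'⟩, ⟨⟨hx', hy'⟩, hxy'⟩, rfl⟩ a b ha hb hab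
  refine ⟨(a • x + b • x', a • y + b • y'), ⟨⟨hK hx hx' ha hb hab, hK hy hy' ha hb hab⟩, ?_⟩, ?_⟩
  · simp only at hxy hxy' ⊢
    have : ∀ z z' : EuclideanSpace ℝ (Fin n), perpProj u (a • z + b • z')
        = a • perpProj u z + b • perpProj u z' := by
      intro z z'
      simp only [perpProj, inner_add_left, real_inner_smul_left]
      module
    rw [this, this, hxy, hxy']
  · simp only [reflAlong, inner_add_left, real_inner_smul_left]
    module

lemma steiner_nonempty (u : EuclideanSpace ℝ (Fin n)) {K : Set (EuclideanSpace ℝ (Fin n))}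
    (hK : K.Nonempty) : (steiner u K).Nonempty := by
  obtain ⟨x, hx⟩ := hK
  exact ⟨_, ⟨(x, x), ⟨⟨hx, hx⟩, rfl⟩, rfl⟩⟩

lemma steiner_subset_closedBall {u : EuclideanSpace ℝ (Fin n)} (hu : ‖u‖ = 1)
    {K : Set (EuclideanSpace ℝ (Fin n))} {R : ℝ} (hK : K ⊆ closedBall 0 R) :
    steiner u K ⊆ closedBall 0 R := by
  rintro _ ⟨⟨x, y⟩, ⟨⟨hx, hy⟩, -⟩, rfl⟩
  have h1 := mem_closedBall_zero_iff.1 (hK hx)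
  have h2 := mem_closedBall_zero_iff.1 (hK hy)
  have h3 := norm_add_le x (reflAlong u y)
  rw [norm_reflAlong hu] at h3
  rw [mem_closedBall_zero_iff, norm_smul]
  simp only [one_div, norm_inv, Real.norm_ofNat]
  linarith

lemma mem_steiner_line {u z : EuclideanSpace ℝ (Fin n)} (hu : ‖u‖ = 1) (hz : ⟪z, u⟫ = 0)
    {K : Set (EuclideanSpace ℝ (Fin n))} (s : ℝ) :
    z + s • u ∈ steiner u K ↔
      ∃ a b : ℝ, z + a • u ∈ K ∧ z + b • u ∈ K ∧ s = (a - b) / 2 := by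
  constructor
  · rintro ⟨⟨x, y⟩, ⟨⟨hx, hy⟩, hxy⟩, h⟩
    simp only at hx hy hxy h
    have e1 := perpProj_add u x
    have e2 := perpProj_add u y
    have e3 : perpProj u x + ((⟪x, u⟫ - ⟪y, u⟫) / 2) • u = z + s • u := by
      have e6 : reflAlong u y = perpProj u x + (-⟪y, u⟫) • u := by
        rw [hxy, ← reflAlong_line hu (inner_perpProj hu y), e2]
      rw [← h, e6, perpProj]
      module
    have e4 : perpProj u x = z := by
      have := congrArg (perpProj u) e3
      rwa [perpProj_line hu (inner_perpProj hu x), perpProj_line hu hz] at this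
    have e5 : (⟪x, u⟫ - ⟪y, u⟫) / 2 = s := by
      have := congrArg (fun w => ⟪w, u⟫) e3
      simpa only [inner_line hu (inner_perpProj hu x), inner_line hu hz] using this
    refine ⟨⟪x, u⟫, ⟪y, u⟫, ?_, ?_, e5.symm⟩
    · rw [← e4, e1]; exact hx
    · rw [← e4, hxy, e2]; exact hy
  · rintro ⟨a, b, ha, hb, rfl⟩
    refine ⟨(z + a • u, z + b • u), ⟨⟨ha, hb⟩, ?_⟩, ?_⟩
    · simp only [perpProj_line hu hz]
    · simp only [reflAlong_line hu hz]
      module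

/-- The chords of `K` and of `steiner u K` on a line parallel to `u`. -/
lemma fiber_cases {u z : EuclideanSpace ℝ (Fin n)} (hu : ‖u‖ = 1) (hz : ⟪z, u⟫ = 0)
    {K : Set (EuclideanSpace ℝ (Fin n))} (hK : IsCompact K) (hKc : Convex ℝ K) :
    ((∀ s : ℝ, z + s • u ∉ K) ∧ (∀ s : ℝ, z + s • u ∉ steiner u K)) ∨
    ∃ m l : ℝ, 0 ≤ l ∧ (∀ s : ℝ, z + s • u ∈ K ↔ s ∈ Icc (m - l) (m + l)) ∧
      (∀ s : ℝ, z + s • u ∈ steiner u K ↔ s ∈ Icc (-l) l) := by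
  set A : Set ℝ := {s | z + s • u ∈ K} with hA
  by_cases hne : A.Nonempty
  · right
    have hcl : IsClosed A := hK.isClosed.preimage (by fun_prop : Continuous fun s : ℝ => z + s • u)
    have hconv : Convex ℝ A := by
      intro s hs t ht a b ha hb hab
      have : z + (a • s + b • t) • u = a • (z + s • u) + b • (z + t • u) := by
        have : z = (a + b) • z := by rw [hab, one_smul]
        nth_rewrite 1 [this]
        simp only [smul_eq_mul]
        module
      change z + (a • s + b • t) • u ∈ K
      rw [this]
      exact hKc hs ht ha hb hab
    have hbdd : Bornology.IsBounded A := by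
      obtain ⟨R, hR⟩ := hK.isBounded.subset_closedBall 0
      refine (isBounded_closedBall (x := (0 : ℝ)) (r := R)).subset fun s hs => ?_
      have h1 := mem_closedBall_zero_iff.1 (hR hs)
      have h2 := abs_real_inner_le_norm (z + s • u) u
      rw [inner_line hu hz, hu, mul_one] at h2
      rw [mem_closedBall_zero_iff]
      exact h2.trans h1
    have hcpt : IsCompact A := Metric.isCompact_of_isClosed_isBounded hcl hbdd
    have hI := eq_Icc_of_connected_compact ⟨hne, hconv.isPreconnected⟩ hcpt
    set a := sInf A
    set b := sSup A
    have hab : a ≤ b := by rw [hI] at hne; exact nonempty_Icc.1 hne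
    have hmem : ∀ s : ℝ, z + s • u ∈ K ↔ s ∈ Icc a b := fun s => by rw [← hI]; rfl
    refine ⟨(a + b) / 2, (b - a) / 2, by linarith, ?_, ?_⟩
    · intro s
      rw [hmem]
      ring_nf
    · intro s
      rw [mem_steiner_line hu hz]
      simp only [hmem, mem_Icc]
      constructor
      · rintro ⟨c, d, ⟨h1, h2⟩, ⟨h3, h4⟩, rfl⟩
        constructor <;> linarith
      · rintro ⟨h1, h2⟩
        exact ⟨(a + b) / 2 + s, (a + b) / 2 - s, ⟨by linarith, by linarith⟩,
          ⟨by linarith, by linarith⟩, by ring⟩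
  · left
    have hA0 : ∀ s : ℝ, z + s • u ∉ K := fun s hs => hne ⟨s, hs⟩
    refine ⟨hA0, fun s hs => ?_⟩
    obtain ⟨a, _, ha, _⟩ := (mem_steiner_line hu hz s).1 hs
    exact hA0 a ha

end

section
variable {n : ℕ}

/-! ### Energy and second moment under Steiner symmetrization -/

/-- The set of parameters of the points of `K` on the line `perpProj u x + ℝ u`. -/
def fiber (u : EuclideanSpace ℝ (Fin n)) (K : Set (EuclideanSpace ℝ (Fin n)))
    (x : EuclideanSpace ℝ (Fin n)) : Set ℝ :=
  (fun t : ℝ => perpProj u x + t • u) ⁻¹' K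

lemma measurableSet_fiber (u : EuclideanSpace ℝ (Fin n)) {K : Set (EuclideanSpace ℝ (Fin n))}
    (hK : MeasurableSet K) (x : EuclideanSpace ℝ (Fin n)) : MeasurableSet (fiber u K x) :=
  (by fun_prop : Measurable fun t : ℝ => perpProj u x + t • u) hK

lemma setLIntegral_strip {u : EuclideanSpace ℝ (Fin n)} (hu : ‖u‖ = 1)
    {K : Set (EuclideanSpace ℝ (Fin n))} (hK : MeasurableSet K)
    {w : EuclideanSpace ℝ (Fin n) → ℝ≥0∞} (hw : Measurable w) :
    ∫⁻ x in K, w x = ∫⁻ x in strip u, ∫⁻ t in fiber u K x, w (perpProj u x + t • u) := by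
  rw [← lintegral_indicator hK, lintegral_strip hu (hw.indicator hK)]
  congr 1; ext x
  rw [← lintegral_indicator (measurableSet_fiber u hK x)]
  rfl

lemma setLIntegral_setLIntegral_strip {u : EuclideanSpace ℝ (Fin n)} (hu : ‖u‖ = 1)
    {K L : Set (EuclideanSpace ℝ (Fin n))} (hK : MeasurableSet K) (hL : MeasurableSet L)
    {w : EuclideanSpace ℝ (Fin n) → EuclideanSpace ℝ (Fin n) → ℝ≥0∞}
    (hw : Measurable (Function.uncurry w)) :
    ∫⁻ x in K, ∫⁻ y in L, w x y = ∫⁻ x in strip u, ∫⁻ y in strip u,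
      ∫⁻ s in fiber u K x, ∫⁻ t in fiber u L y,
        w (perpProj u x + s • u) (perpProj u y + t • u) := by
  have hP := (continuous_perpProj u).measurable
  have hm1 : Measurable fun x => ∫⁻ y in L, w x y := hw.lintegral_prod_right'
  rw [setLIntegral_strip hu hK hm1]
  congr 1; ext x
  have h1 : ∀ s : ℝ, ∫⁻ y in L, w (perpProj u x + s • u) y = ∫⁻ y in strip u,
      ∫⁻ t in fiber u L y, w (perpProj u x + s • u) (perpProj u y + t • u) := fun s =>
    setLIntegral_strip hu hL (hw.comp (by fun_prop : Measurable fun y => (perpProj u x + s • u, y)))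
  simp only [h1]
  rw [lintegral_lintegral_swap]
  have h2 : (Function.uncurry fun (s : ℝ) (y : EuclideanSpace ℝ (Fin n)) =>
      ∫⁻ t in fiber u L y, w (perpProj u x + s • u) (perpProj u y + t • u))
      = fun q : ℝ × EuclideanSpace ℝ (Fin n) => ∫⁻ t : ℝ,
        L.indicator (w (perpProj u x + q.1 • u)) (perpProj u q.2 + t • u) := by
    ext ⟨s, y⟩
    simp only [Function.uncurry]
    rw [← lintegral_indicator (measurableSet_fiber u hL y)]
    rfl
  rw [h2]
  apply Measurable.aemeasurable
  apply Measurable.lintegral_prod_right' (f := fun q : (ℝ × EuclideanSpace ℝ (Fin n)) × ℝ =>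
    L.indicator (w (perpProj u x + q.1.1 • u)) (perpProj u q.1.2 + q.2 • u))
  have h3 : (fun q : (ℝ × EuclideanSpace ℝ (Fin n)) × ℝ =>
      L.indicator (w (perpProj u x + q.1.1 • u)) (perpProj u q.1.2 + q.2 • u))
      = ((fun q : (ℝ × EuclideanSpace ℝ (Fin n)) × ℝ => perpProj u q.1.2 + q.2 • u) ⁻¹' L).indicator
        (fun q => w (perpProj u x + q.1.1 • u) (perpProj u q.1.2 + q.2 • u)) := by
    ext q; rfl
  rw [h3]
  have h4 : Measurable fun q : (ℝ × EuclideanSpace ℝ (Fin n)) × ℝ =>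
      perpProj u q.1.2 + q.2 • u := by fun_prop
  refine Measurable.indicator ?_ (h4 hL)
  exact hw.comp (f := fun q : (ℝ × EuclideanSpace ℝ (Fin n)) × ℝ =>
    (perpProj u x + q.1.1 • u, perpProj u q.1.2 + q.2 • u)) (by fun_prop)

lemma setLIntegral_Icc_add (f : ℝ → ℝ≥0∞) (m l : ℝ) :
    ∫⁻ s in Icc (m - l) (m + l), f s = ∫⁻ s in Icc (-l) l, f (s + m) := by
  rw [← (measurePreserving_add_right (volume : Measure ℝ) m).setLIntegral_comp_preimage_emb
    (measurableEmbedding_addRight m) f (Icc (m - l) (m + l))]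
  congr 2
  ext s
  simp only [mem_preimage, mem_Icc]
  constructor <;> rintro ⟨h, h'⟩ <;> constructor <;> linarith

lemma setLIntegral_Icc_neg (f : ℝ → ℝ≥0∞) (l : ℝ) :
    ∫⁻ s in Icc (-l) l, f s = ∫⁻ s in Icc (-l) l, f (-s) := by
  rw [← (Measure.measurePreserving_neg (volume : Measure ℝ)).setLIntegral_comp_preimage_emb
    (MeasurableEquiv.neg ℝ).measurableEmbedding f (Icc (-l) l)]
  congr 2
  ext s
  simp only [mem_preimage, mem_Icc]
  constructor <;> rintro ⟨h, h'⟩ <;> constructor <;> linarith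

lemma fiber_eq_cases {u : EuclideanSpace ℝ (Fin n)} (hu : ‖u‖ = 1)
    {K : Set (EuclideanSpace ℝ (Fin n))} (hK : IsCompact K) (hKc : Convex ℝ K)
    (x : EuclideanSpace ℝ (Fin n)) :
    (fiber u K x = ∅ ∧ fiber u (steiner u K) x = ∅) ∨
    ∃ m l : ℝ, 0 ≤ l ∧ fiber u K x = Icc (m - l) (m + l) ∧
      fiber u (steiner u K) x = Icc (-l) l := by
  rcases fiber_cases hu (inner_perpProj hu x) hK hKc with ⟨h1, h2⟩ | ⟨m, l, hl, h1, h2⟩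
  · left
    exact ⟨eq_empty_of_forall_notMem h1, eq_empty_of_forall_notMem h2⟩
  · right
    exact ⟨m, l, hl, Set.ext h1, Set.ext h2⟩

lemma volume_steiner {u : EuclideanSpace ℝ (Fin n)} (hu : ‖u‖ = 1)
    {K : Set (EuclideanSpace ℝ (Fin n))} (hK : IsCompact K) (hKc : Convex ℝ K) :
    volume (steiner u K) = volume K := by
  rw [← setLIntegral_one, ← setLIntegral_one,
    setLIntegral_strip hu (isCompact_steiner u hK).measurableSet measurable_const,
    setLIntegral_strip hu hK.measurableSet measurable_const]
  congr 1; ext x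
  rcases fiber_eq_cases hu hK hKc x with ⟨h1, h2⟩ | ⟨m, l, hl, h1, h2⟩
  · rw [h1, h2]
  · rw [h1, h2]
    simp only [setLIntegral_one, Real.volume_Icc]
    ring_nf

/-- The double integral `∫_K ∫_L [x, y] ^ p dy dx`. -/
def sineEnergy (p : ℝ) (K L : Set (EuclideanSpace ℝ (Fin n))) : ℝ≥0∞ :=
  ∫⁻ x in K, ∫⁻ y in L, sineKer p x y

lemma measurable_sineKer {p : ℝ} (hp : 0 ≤ p) :
    Measurable (Function.uncurry (sineKer (n := n) p)) :=
  (continuous_sineKer hp).measurable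

/-- Centring two parallel chords decreases the energy. The integral over the chords with
midpoints `(m, m')` equals the one with midpoints `(-m, -m')`, and the average of the two
integrands dominates the integrand of the centred chords. -/
lemma sineEnergy_chords {p : ℝ} (hp : 1 ≤ p) {u z w : EuclideanSpace ℝ (Fin n)} (hu : ‖u‖ = 1)
    (hz : ⟪z, u⟫ = 0) (hw : ⟪w, u⟫ = 0) (m l m' l' : ℝ) :
    ∫⁻ s in Icc (-l) l, ∫⁻ t in Icc (-l') l', sineKer p (z + s • u) (w + t • u) ≤
    ∫⁻ s in Icc (m - l) (m + l), ∫⁻ t in Icc (m' - l') (m' + l'),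
      sineKer p (z + s • u) (w + t • u) := by
  have hp0 : 0 ≤ p := by linarith
  have hmeas : ∀ a b c d : ℝ, Measurable (Function.uncurry fun s t : ℝ =>
      sineKer p (z + (a * s + b) • u) (w + (c * t + d) • u)) := by
    intro a b c d
    exact (measurable_sineKer hp0).comp (f := fun q : ℝ × ℝ =>
      (z + (a * q.1 + b) • u, w + (c * q.2 + d) • u)) (by fun_prop)
  set A := ∫⁻ s in Icc (m - l) (m + l), ∫⁻ t in Icc (m' - l') (m' + l'),
      sineKer p (z + s • u) (w + t • u) with hA
  have e1 : A = ∫⁻ s in Icc (-l) l, ∫⁻ t in Icc (-l') l',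
      sineKer p (z + (s + m) • u) (w + (t + m') • u) := by
    rw [hA, setLIntegral_Icc_add]
    congr 1; ext s
    rw [setLIntegral_Icc_add]
  have e2 : A = ∫⁻ s in Icc (-l) l, ∫⁻ t in Icc (-l') l',
      sineKer p (z + (s - m) • u) (w + (t - m') • u) := by
    rw [e1, setLIntegral_Icc_neg]
    congr 1; ext s
    rw [setLIntegral_Icc_neg]
    congr 1; ext t
    unfold sineKer
    rw [← sinePair_line_neg hu hz hw]
    congr 5 <;> ring
  have e3 : A + A = ∫⁻ s in Icc (-l) l, ∫⁻ t in Icc (-l') l',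
      (sineKer p (z + (s + m) • u) (w + (t + m') • u)
        + sineKer p (z + (s - m) • u) (w + (t - m') • u)) := by
    nth_rewrite 1 [e1]
    rw [e2]
    have h1 := hmeas 1 m 1 m'
    simp only [one_mul] at h1
    have h2 : Measurable fun s => ∫⁻ t in Icc (-l') l',
        sineKer p (z + (s + m) • u) (w + (t + m') • u) := h1.lintegral_prod_right'
    rw [← lintegral_add_left h2]
    congr 1; ext s
    exact (lintegral_add_left (h1.comp measurable_prodMk_left) _).symm
  have e4 : 2 * ∫⁻ s in Icc (-l) l, ∫⁻ t in Icc (-l') l', sineKer p (z + s • u) (w + t • u)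
      ≤ A + A := by
    rw [e3, ← lintegral_const_mul' _ _ (by norm_num)]
    refine lintegral_mono fun s => ?_
    rw [← lintegral_const_mul' _ _ (by norm_num)]
    refine lintegral_mono fun t => ?_
    have h := sinePair_rpow_midpoint hp (z + s • u) (w + t • u) u m m'
    have h2 := ENNReal.ofReal_le_ofReal h
    rw [ENNReal.ofReal_mul (by norm_num), ENNReal.ofReal_add
      (Real.rpow_nonneg (sinePair_nonneg _ _) _) (Real.rpow_nonneg (sinePair_nonneg _ _) _)] at h2
    simp only [sineKer]
    convert h2 using 3
    · simp
    · congr 2 <;> module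
    · congr 2 <;> module
  rw [← two_mul] at e4
  exact (ENNReal.mul_le_mul_iff_right (by norm_num) (by norm_num)).1 e4

lemma sineEnergy_steiner_le {p : ℝ} (hp : 1 ≤ p) {u : EuclideanSpace ℝ (Fin n)} (hu : ‖u‖ = 1)
    {K L : Set (EuclideanSpace ℝ (Fin n))} (hK : IsCompact K) (hKc : Convex ℝ K)
    (hL : IsCompact L) (hLc : Convex ℝ L) :
    sineEnergy p (steiner u K) (steiner u L) ≤ sineEnergy p K L := by
  have hp0 : 0 ≤ p := by linarith
  unfold sineEnergy
  rw [setLIntegral_setLIntegral_strip hu (isCompact_steiner u hK).measurableSet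
    (isCompact_steiner u hL).measurableSet (measurable_sineKer hp0),
    setLIntegral_setLIntegral_strip hu hK.measurableSet hL.measurableSet (measurable_sineKer hp0)]
  refine lintegral_mono fun x => lintegral_mono fun y => ?_
  rcases fiber_eq_cases hu hK hKc x with ⟨h1, h2⟩ | ⟨m, l, hl, h1, h2⟩
  · simp [h2]
  rcases fiber_eq_cases hu hL hLc y with ⟨h1', h2'⟩ | ⟨m', l', hl', h1', h2'⟩
  · simp [h2']
  simp only [h1, h2, h1', h2']
  exact sineEnergy_chords hp hu (inner_perpProj hu x) (inner_perpProj hu y) m l m' l'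

/-- The second moment `∫_K |x|² dx`. -/
def secondMoment (K : Set (EuclideanSpace ℝ (Fin n))) : ℝ≥0∞ :=
  ∫⁻ x in K, ENNReal.ofReal (‖x‖ ^ 2)

/-- The parallel axis identity on a chord: moving its midpoint from `u^⊥` to height `m` adds `m²`
times the length of the chord. -/
lemma secondMoment_chord {u z : EuclideanSpace ℝ (Fin n)} (hu : ‖u‖ = 1) (hz : ⟪z, u⟫ = 0)
    (m l : ℝ) :
    ∫⁻ s in Icc (m - l) (m + l), ENNReal.ofReal (‖z + s • u‖ ^ 2) =
      (∫⁻ s in Icc (-l) l, ENNReal.ofReal (‖z + s • u‖ ^ 2)) +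
        ENNReal.ofReal (m ^ 2) * ENNReal.ofReal (2 * l) := by
  set A := ∫⁻ s in Icc (m - l) (m + l), ENNReal.ofReal (‖z + s • u‖ ^ 2)
  have e1 : A = ∫⁻ s in Icc (-l) l, ENNReal.ofReal (‖z + (s + m) • u‖ ^ 2) :=
    setLIntegral_Icc_add _ _ _
  have e2 : A = ∫⁻ s in Icc (-l) l, ENNReal.ofReal (‖z + (-s + m) • u‖ ^ 2) := by
    rw [e1, setLIntegral_Icc_neg]
  have e3 : A + A = 2 * ((∫⁻ s in Icc (-l) l, ENNReal.ofReal (‖z + s • u‖ ^ 2)) +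
        ENNReal.ofReal (m ^ 2) * ENNReal.ofReal (2 * l)) := by
    nth_rewrite 1 [e1]
    rw [e2, ← lintegral_add_left (by fun_prop)]
    have : ∀ s : ℝ, ENNReal.ofReal (‖z + (s + m) • u‖ ^ 2)
        + ENNReal.ofReal (‖z + (-s + m) • u‖ ^ 2)
        = 2 * (ENNReal.ofReal (‖z + s • u‖ ^ 2) + ENNReal.ofReal (m ^ 2)) := by
      intro s
      rw [← ENNReal.ofReal_add (by positivity) (by positivity),
        ← ENNReal.ofReal_add (by positivity) (by positivity), norm_line_sq hu hz,
        norm_line_sq hu hz, norm_line_sq hu hz,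
        two_mul, ← ENNReal.ofReal_add (by positivity) (by positivity)]
      congr 1; ring
    simp only [this]
    rw [lintegral_const_mul' _ _ (by norm_num), lintegral_add_right _ measurable_const,
      setLIntegral_const, Real.volume_Icc]
    congr 4; ring
  rw [← two_mul] at e3
  exact (ENNReal.mul_right_inj (by norm_num) (by norm_num)).1 e3

lemma secondMoment_steiner_le {u : EuclideanSpace ℝ (Fin n)} (hu : ‖u‖ = 1)
    {K : Set (EuclideanSpace ℝ (Fin n))} (hK : IsCompact K) (hKc : Convex ℝ K) :
    secondMoment (steiner u K) ≤ secondMoment K := by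
  unfold secondMoment
  rw [setLIntegral_strip hu (isCompact_steiner u hK).measurableSet (by fun_prop),
    setLIntegral_strip hu hK.measurableSet (by fun_prop)]
  refine lintegral_mono fun x => ?_
  rcases fiber_eq_cases hu hK hKc x with ⟨h1, h2⟩ | ⟨m, l, hl, h1, h2⟩
  · simp [h2]
  · simp only [h1, h2]
    rw [secondMoment_chord hu (inner_perpProj hu x)]
    exact le_self_add

lemma secondMoment_lt_top {K : Set (EuclideanSpace ℝ (Fin n))} (hK : IsCompact K) :
    secondMoment K < ∞ := by
  obtain ⟨R, hR⟩ := hK.isBounded.subset_closedBall 0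
  calc secondMoment K ≤ ∫⁻ x in K, ENNReal.ofReal (R ^ 2) := by
        refine setLIntegral_mono measurable_const fun x hx => ENNReal.ofReal_le_ofReal ?_
        have := mem_closedBall_zero_iff.1 (hR hx)
        gcongr
    _ < ∞ := by
        rw [setLIntegral_const]
        exact ENNReal.mul_lt_top ENNReal.ofReal_lt_top hK.measure_lt_top

/-- If symmetrization does not decrease the second moment, then by `secondMoment_chord` almost every
chord of positive length is already centred, so that `K` and its reflection agree up to a null
set. -/
lemma volume_diff_refl {u : EuclideanSpace ℝ (Fin n)} (hu : ‖u‖ = 1)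
    {K : Set (EuclideanSpace ℝ (Fin n))} (hK : IsCompact K) (hKc : Convex ℝ K)
    (h : secondMoment K ≤ secondMoment (steiner u K)) :
    volume (K \ (reflAlong u ⁻¹' K)) = 0 := by
  have hs := isCompact_steiner u hK
  have hmR : MeasurableSet (reflAlong u ⁻¹' K) := (continuous_reflAlong u).measurable hK.measurableSet
  have hfin := secondMoment_lt_top hs
  have hle := secondMoment_steiner_le hu hK hKc
  have heq := le_antisymm hle h
  unfold secondMoment at heq hfin
  have hP := (continuous_perpProj u).measurable
  have hmeas : Measurable fun x => ∫⁻ t in fiber u K x,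
      ENNReal.ofReal (‖perpProj u x + t • u‖ ^ 2) := by
    have : (fun x => ∫⁻ t in fiber u K x, ENNReal.ofReal (‖perpProj u x + t • u‖ ^ 2))
      = fun x => ∫⁻ t : ℝ, K.indicator (fun y => ENNReal.ofReal (‖y‖ ^ 2))
          (perpProj u x + t • u) := by
      ext x
      rw [← lintegral_indicator (measurableSet_fiber u hK.measurableSet x)]
      rfl
    rw [this]
    apply Measurable.lintegral_prod_right' (f := fun q : EuclideanSpace ℝ (Fin n) × ℝ =>
      K.indicator (fun y => ENNReal.ofReal (‖y‖ ^ 2)) (perpProj u q.1 + q.2 • u))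
    exact (Measurable.indicator (by fun_prop) hK.measurableSet).comp
      (by fun_prop : Measurable fun q : EuclideanSpace ℝ (Fin n) × ℝ => perpProj u q.1 + q.2 • u)
  rw [setLIntegral_strip hu hs.measurableSet (by fun_prop)] at heq hfin
  rw [setLIntegral_strip hu hK.measurableSet (by fun_prop)] at heq
  have hae := ae_eq_of_ae_le_of_lintegral_le (μ := volume.restrict (strip u))
    (f := fun x => ∫⁻ t in fiber u (steiner u K) x, ENNReal.ofReal (‖perpProj u x + t • u‖ ^ 2))
    (g := fun x => ∫⁻ t in fiber u K x, ENNReal.ofReal (‖perpProj u x + t • u‖ ^ 2))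
    (Filter.Eventually.of_forall fun x => by
      rcases fiber_eq_cases hu hK hKc x with ⟨h1, h2⟩ | ⟨m, l, hl, h1, h2⟩
      · simp [h2]
      · simp only [h1, h2]
        rw [secondMoment_chord hu (inner_perpProj hu x)]
        exact le_self_add) hfin.ne hmeas.aemeasurable heq.ge
  rw [← setLIntegral_one, setLIntegral_strip hu (hK.measurableSet.diff hmR) measurable_const]
  rw [lintegral_congr_ae (g := fun _ => 0) ?_, lintegral_zero]
  filter_upwards [hae] with x hx
  rw [setLIntegral_one]
  have hfib : fiber u (K \ (reflAlong u ⁻¹' K)) x = fiber u K x \ {s | -s ∈ fiber u K x} := by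
    ext s
    simp only [fiber, mem_preimage, mem_sdiff, mem_ofPred_eq, reflAlong_line hu (inner_perpProj hu x)]
  rw [hfib]
  rcases fiber_eq_cases hu hK hKc x with ⟨h1, h2⟩ | ⟨m, l, hl, h1, h2⟩
  · simp [h1]
  · simp only [h1, h2] at hx
    rw [secondMoment_chord hu (inner_perpProj hu x)] at hx
    have hf2 : ∫⁻ s in Icc (-l) l, ENNReal.ofReal (‖perpProj u x + s • u‖ ^ 2) ≠ ∞ := by
      have hc : Continuous fun s : ℝ => ‖perpProj u x + s • u‖ ^ 2 := by fun_prop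
      exact (hc.integrableOn_Icc (a := -l) (b := l)).lintegral_lt_top.ne
    have hz : ENNReal.ofReal (m ^ 2) * ENNReal.ofReal (2 * l) = 0 := by
      refine (ENNReal.add_right_inj hf2).1 ?_
      rw [← hx, add_zero]
    rw [h1]
    rcases mul_eq_zero.1 hz with h3 | h3
    · have hm : m = 0 := by
        have := ENNReal.ofReal_eq_zero.1 h3
        nlinarith
      convert measure_empty (μ := (volume : Measure ℝ))
      subst hm
      ext s
      simp only [mem_sdiff, mem_Icc, mem_ofPred_eq, mem_empty_iff_false, iff_false]
      rintro ⟨⟨h, h'⟩, hn⟩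
      exact hn ⟨by linarith, by linarith⟩
    · have hl0 : l = 0 := by
        have := ENNReal.ofReal_eq_zero.1 h3
        linarith
      subst hl0
      refine measure_mono_null sdiff_subset ?_
      simp

end

section
variable {n : ℕ}

/-! ### Convex bodies in the Hausdorff metric -/

open TopologicalSpace Filter Topology

lemma eventually_notMem {x : EuclideanSpace ℝ (Fin n)}
    {K : NonemptyCompacts (EuclideanSpace ℝ (Fin n))} (hx : x ∉ K) :
    ∀ᶠ L : NonemptyCompacts (EuclideanSpace ℝ (Fin n)) in 𝓝 K, x ∉ L := by
  have h1 : 0 < infDist x K := (K.isCompact.isClosed.notMem_iff_infDist_pos K.nonempty).1 hx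
  have h2 := (lipschitz_infDist_set x).continuous.tendsto K
  filter_upwards [h2.eventually (lt_mem_nhds h1)] with L hL hxL
  have : infDist x (L : Set (EuclideanSpace ℝ (Fin n))) = 0 := infDist_zero_of_mem hxL
  linarith

/-- An interior point of `K` belongs to every convex body Hausdorff-close to `K`: a hyperplane
separating it from such a body would leave a point of `K` far away from that body. -/
lemma eventually_mem {x : EuclideanSpace ℝ (Fin n)}
    {K : NonemptyCompacts (EuclideanSpace ℝ (Fin n))}
    (hx : x ∈ interior (K : Set (EuclideanSpace ℝ (Fin n)))) :
    ∀ᶠ L : NonemptyCompacts (EuclideanSpace ℝ (Fin n)) in 𝓝 K,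
      Convex ℝ (L : Set (EuclideanSpace ℝ (Fin n))) → x ∈ L := by
  obtain ⟨ρ, hρ, hball⟩ := nhds_basis_closedBall.mem_iff.1 (mem_interior_iff_mem_nhds.1 hx)
  filter_upwards [Metric.ball_mem_nhds K hρ] with L hL hLc
  by_contra hxL
  obtain ⟨f, s, hfx, hfL⟩ := geometric_hahn_banach_point_closed hLc L.isCompact.isClosed hxL
  obtain ⟨a, rfl⟩ := (InnerProductSpace.toDual ℝ (EuclideanSpace ℝ (Fin n))).surjective f
  simp only [InnerProductSpace.toDual_apply_apply] at hfx hfL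
  obtain ⟨z0, hz0⟩ := L.nonempty
  have ha : a ≠ 0 := by
    rintro rfl
    have := hfL z0 hz0
    simp at hfx this
    linarith
  have hna : 0 < ‖a‖ := norm_pos_iff.2 ha
  set w := x - (ρ / ‖a‖) • a with hw
  have hwK : w ∈ (K : Set (EuclideanSpace ℝ (Fin n))) := by
    apply hball
    rw [mem_closedBall, dist_eq_norm, hw, sub_sub_cancel_left, norm_neg, norm_smul,
      Real.norm_of_nonneg (by positivity)]
    field_simp
    exact le_rfl
  have hd : hausdorffDist (K : Set (EuclideanSpace ℝ (Fin n))) L < ρ := by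
    rw [mem_ball, dist_comm, NonemptyCompacts.dist_eq] at hL
    exact hL
  obtain ⟨z, hz, hwz⟩ := exists_dist_lt_of_hausdorffDist_lt hwK hd
    (hausdorffEDist_ne_top_of_nonempty_of_bounded K.nonempty L.nonempty K.isCompact.isBounded
      L.isCompact.isBounded)
  have h1 := hfL z hz
  have h2 : ⟪a, z⟫ - ⟪a, w⟫ ≤ ‖a‖ * dist w z := by
    rw [← inner_sub_right, dist_comm, dist_eq_norm]
    exact real_inner_le_norm _ _
  have h3 : ⟪a, w⟫ = ⟪a, x⟫ - ρ * ‖a‖ := by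
    rw [hw, inner_sub_right, real_inner_smul_right, real_inner_self_eq_norm_sq]
    field_simp
  nlinarith

/-- The nonempty compact convex sets, with or without interior, contained in the ball of radius
`R`. -/
def convexIn (n : ℕ) (R : ℝ) : Set (NonemptyCompacts (EuclideanSpace ℝ (Fin n))) :=
  {K | (K : Set (EuclideanSpace ℝ (Fin n))) ⊆ closedBall 0 R ∧
    Convex ℝ (K : Set (EuclideanSpace ℝ (Fin n)))}

lemma isClosed_convex :
    IsClosed {K : NonemptyCompacts (EuclideanSpace ℝ (Fin n)) |
      Convex ℝ (K : Set (EuclideanSpace ℝ (Fin n)))} := by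
  rw [← isOpen_compl_iff, isOpen_iff_mem_nhds]
  intro K hK
  simp only [mem_compl_iff, mem_ofPred_eq, Convex, StarConvex, not_forall] at hK
  obtain ⟨x, hx, y, hy, a, b, ha, hb, hab, hxy⟩ := hK
  set c := a • x + b • y
  have h1 : 0 < infDist c K := (K.isCompact.isClosed.notMem_iff_infDist_pos K.nonempty).1 hxy
  set δ := infDist c K
  filter_upwards [Metric.ball_mem_nhds K (half_pos h1)] with L hL hLc
  have hd : hausdorffDist (K : Set (EuclideanSpace ℝ (Fin n))) L < δ / 2 := by
    rw [mem_ball, dist_comm, NonemptyCompacts.dist_eq] at hL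
    exact hL
  have hfin : hausdorffEDist (K : Set (EuclideanSpace ℝ (Fin n))) L ≠ ⊤ :=
    hausdorffEDist_ne_top_of_nonempty_of_bounded K.nonempty L.nonempty K.isCompact.isBounded
      L.isCompact.isBounded
  obtain ⟨x', hx', hxx⟩ := exists_dist_lt_of_hausdorffDist_lt hx hd hfin
  obtain ⟨y', hy', hyy⟩ := exists_dist_lt_of_hausdorffDist_lt hy hd hfin
  have hc' : a • x' + b • y' ∈ L := hLc hx' hy' ha hb hab
  obtain ⟨c', hc'K, hcc⟩ := exists_dist_lt_of_hausdorffDist_lt' hc' hd hfin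
  have h2 : δ ≤ dist c c' := infDist_le_dist_of_mem hc'K
  have h3 : dist c (a • x' + b • y') ≤ a * dist x x' + b * dist y y' := by
    rw [dist_eq_norm, dist_eq_norm, dist_eq_norm,
      show c - (a • x' + b • y') = a • (x - x') + b • (y - y') by simp only [c]; module]
    refine (norm_add_le _ _).trans ?_
    rw [norm_smul, norm_smul, Real.norm_of_nonneg ha, Real.norm_of_nonneg hb]
  have h4 := dist_triangle c (a • x' + b • y') c'
  rw [dist_comm] at hcc
  have h5 : a * dist x x' + b * dist y y' ≤ δ / 2 := by
    have : a * dist x x' + b * dist y y' ≤ a * (δ / 2) + b * (δ / 2) := by gcongr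
    rw [← add_mul, hab, one_mul] at this
    exact this
  linarith

lemma isCompact_convexIn (R : ℝ) : IsCompact (convexIn n R) :=
  (NonemptyCompacts.isCompact_subsets_of_isCompact (isCompact_closedBall 0 R)).inter_right
    isClosed_convex

/-- Indicator functions of convex bodies vary continuously off the frontier of the limit body,
which is a null set. -/
lemma ae_eventually_mem_iff {R : ℝ} {K : NonemptyCompacts (EuclideanSpace ℝ (Fin n))}
    (hK : K ∈ convexIn n R) :
    ∀ᵐ x : EuclideanSpace ℝ (Fin n), ∀ᶠ L in 𝓝[convexIn n R] K, (x ∈ L ↔ x ∈ K) := by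
  have h0 : ∀ᵐ x : EuclideanSpace ℝ (Fin n), x ∉ frontier (K : Set (EuclideanSpace ℝ (Fin n))) :=
    measure_eq_zero_iff_ae_notMem.1 (hK.2.addHaar_frontier volume)
  filter_upwards [h0] with x hx
  by_cases hxK : x ∈ K
  · have hi : x ∈ interior (K : Set (EuclideanSpace ℝ (Fin n))) := by
      by_contra hi
      exact hx ⟨subset_closure hxK, hi⟩
    filter_upwards [mem_nhdsWithin_of_mem_nhds (eventually_mem hi), self_mem_nhdsWithin] with L h1 h2
    exact iff_of_true (h1 h2.2) hxK
  · filter_upwards [mem_nhdsWithin_of_mem_nhds (eventually_notMem hxK)] with L h1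
    exact iff_of_false h1 hxK

lemma continuousOn_setLIntegral {R : ℝ} {w : EuclideanSpace ℝ (Fin n) → ℝ≥0∞} {C : ℝ≥0∞}
    (hw : Measurable w) (hC : C ≠ ∞) (hwC : ∀ x ∈ closedBall (0 : EuclideanSpace ℝ (Fin n)) R,
      w x ≤ C) :
    ContinuousOn (fun K : NonemptyCompacts (EuclideanSpace ℝ (Fin n)) =>
      ∫⁻ x in (K : Set (EuclideanSpace ℝ (Fin n))), w x) (convexIn n R) := by
  intro K hK
  have hind : ∀ L : NonemptyCompacts (EuclideanSpace ℝ (Fin n)),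
      ∫⁻ x in (L : Set (EuclideanSpace ℝ (Fin n))), w x
      = ∫⁻ x, (L : Set (EuclideanSpace ℝ (Fin n))).indicator w x := fun L =>
    (lintegral_indicator L.isCompact.measurableSet w).symm
  simp only [ContinuousWithinAt, hind]
  refine tendsto_lintegral_filter_of_dominated_convergence
    ((closedBall (0 : EuclideanSpace ℝ (Fin n)) R).indicator fun _ => C) ?_ ?_ ?_ ?_
  · exact Eventually.of_forall fun L => hw.indicator L.isCompact.measurableSet
  · filter_upwards [self_mem_nhdsWithin] with L hL
    refine Eventually.of_forall fun x => ?_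
    by_cases hx : x ∈ (L : Set (EuclideanSpace ℝ (Fin n)))
    · rw [indicator_of_mem hx, indicator_of_mem (hL.1 hx)]
      exact hwC x (hL.1 hx)
    · rw [indicator_of_notMem hx]
      exact zero_le
  · rw [lintegral_indicator measurableSet_closedBall, setLIntegral_const]
    exact (ENNReal.mul_lt_top hC.lt_top measure_closedBall_lt_top).ne
  · filter_upwards [ae_eventually_mem_iff hK] with x hx
    refine tendsto_const_nhds.congr' ?_
    filter_upwards [hx] with L hL
    classical
    have hL' : (x ∈ (L : Set (EuclideanSpace ℝ (Fin n)))) ↔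
      x ∈ (K : Set (EuclideanSpace ℝ (Fin n))) := hL
    simp only [indicator_apply, hL']

lemma continuousOn_sineEnergy {p : ℝ} (hp : 0 ≤ p) {R : ℝ} (hR : 0 ≤ R) :
    ContinuousOn (fun P : NonemptyCompacts (EuclideanSpace ℝ (Fin n)) ×
      NonemptyCompacts (EuclideanSpace ℝ (Fin n)) =>
      sineEnergy p (P.1 : Set (EuclideanSpace ℝ (Fin n))) P.2) (convexIn n R ×ˢ convexIn n R) := by
  rintro ⟨K, L⟩ ⟨hK, hL⟩
  simp only at hK hL
  have hmk := measurable_sineKer (n := n) hp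
  have hms : ∀ P : NonemptyCompacts (EuclideanSpace ℝ (Fin n)) ×
      NonemptyCompacts (EuclideanSpace ℝ (Fin n)),
      MeasurableSet ((P.1 : Set (EuclideanSpace ℝ (Fin n))) ×ˢ
        (P.2 : Set (EuclideanSpace ℝ (Fin n)))) := fun P =>
    P.1.isCompact.measurableSet.prod P.2.isCompact.measurableSet
  have hind : ∀ P : NonemptyCompacts (EuclideanSpace ℝ (Fin n)) ×
      NonemptyCompacts (EuclideanSpace ℝ (Fin n)),
      sineEnergy p (P.1 : Set (EuclideanSpace ℝ (Fin n))) P.2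
      = ∫⁻ q, ((P.1 : Set (EuclideanSpace ℝ (Fin n))) ×ˢ
        (P.2 : Set (EuclideanSpace ℝ (Fin n)))).indicator
          (Function.uncurry (sineKer p)) q := by
    intro P
    rw [lintegral_indicator (hms P), Measure.volume_eq_prod, ← Measure.prod_restrict,
      lintegral_prod _ hmk.aemeasurable]
    rfl
  rw [funext hind]
  refine tendsto_lintegral_filter_of_dominated_convergence
    ((closedBall (0 : EuclideanSpace ℝ (Fin n)) R ×ˢ
      closedBall (0 : EuclideanSpace ℝ (Fin n)) R).indicator
        fun _ => ENNReal.ofReal ((R * R) ^ p)) ?_ ?_ ?_ ?_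
  · exact Eventually.of_forall fun P => hmk.indicator (hms P)
  · filter_upwards [self_mem_nhdsWithin] with P hP
    refine Eventually.of_forall fun x => ?_
    by_cases hx : x ∈ (P.1 : Set (EuclideanSpace ℝ (Fin n))) ×ˢ
        (P.2 : Set (EuclideanSpace ℝ (Fin n)))
    · have hx1 := hP.1.1 hx.1
      have hx2 := hP.2.1 hx.2
      rw [indicator_of_mem hx, indicator_of_mem (show x ∈ closedBall (0 : EuclideanSpace ℝ (Fin n)) R ×ˢ
        closedBall (0 : EuclideanSpace ℝ (Fin n)) R from ⟨hx1, hx2⟩)]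
      rw [mem_closedBall_zero_iff] at hx1 hx2
      refine ENNReal.ofReal_le_ofReal (Real.rpow_le_rpow (sinePair_nonneg _ _) ?_ hp)
      exact (sinePair_le _ _).trans (by gcongr)
    · rw [indicator_of_notMem hx]
      exact zero_le
  · rw [lintegral_indicator (measurableSet_closedBall.prod measurableSet_closedBall),
      setLIntegral_const, Measure.volume_eq_prod, Measure.prod_prod]
    exact (ENNReal.mul_lt_top ENNReal.ofReal_lt_top
      (ENNReal.mul_lt_top measure_closedBall_lt_top measure_closedBall_lt_top)).ne
  · have h1 : ∀ᵐ q : EuclideanSpace ℝ (Fin n) × EuclideanSpace ℝ (Fin n),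
        ∀ᶠ P in 𝓝[convexIn n R] K, (q.1 ∈ P ↔ q.1 ∈ K) :=
      (Measure.quasiMeasurePreserving_fst (μ := volume) (ν := volume)).ae (ae_eventually_mem_iff hK)
    have h2 : ∀ᵐ q : EuclideanSpace ℝ (Fin n) × EuclideanSpace ℝ (Fin n),
        ∀ᶠ P in 𝓝[convexIn n R] L, (q.2 ∈ P ↔ q.2 ∈ L) :=
      (Measure.quasiMeasurePreserving_snd (μ := volume) (ν := volume)).ae (ae_eventually_mem_iff hL)
    filter_upwards [h1, h2] with q hq1 hq2
    refine tendsto_const_nhds.congr' ?_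
    rw [nhdsWithin_prod_eq]
    filter_upwards [hq1.prod_mk hq2] with P hP
    classical
    have hP1 : (q.1 ∈ (P.1 : Set (EuclideanSpace ℝ (Fin n)))) ↔
      q.1 ∈ (K : Set (EuclideanSpace ℝ (Fin n))) := hP.1
    have hP2 : (q.2 ∈ (P.2 : Set (EuclideanSpace ℝ (Fin n)))) ↔
      q.2 ∈ (L : Set (EuclideanSpace ℝ (Fin n))) := hP.2
    simp only [indicator_apply, mem_prod, hP1, hP2]

/-! ### Balls minimize the energy -/

/-- Equality in the second moment comparison forces invariance under the reflection. -/
lemma reflAlong_mem {u : EuclideanSpace ℝ (Fin n)} (hu : ‖u‖ = 1)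
    {K : Set (EuclideanSpace ℝ (Fin n))} (hK : IsCompact K) (hKc : Convex ℝ K)
    (hvol : volume K ≠ 0) (h : secondMoment K ≤ secondMoment (steiner u K))
    {x : EuclideanSpace ℝ (Fin n)} (hx : x ∈ K) : reflAlong u x ∈ K := by
  have h0 := volume_diff_refl hu hK hKc h
  have hcl : IsClosed (reflAlong u ⁻¹' K) := hK.isClosed.preimage (continuous_reflAlong u)
  have hinter : (interior K).Nonempty := by
    rw [nonempty_iff_ne_empty]
    intro he
    have hf : K ⊆ frontier K := by
      rw [frontier, he, sdiff_empty]; exact subset_closure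
    exact hvol (measure_mono_null hf (hKc.addHaar_frontier volume))
  have hsub : interior K ⊆ reflAlong u ⁻¹' K := by
    intro y hy
    by_contra hy'
    have hop : IsOpen (interior K \ reflAlong u ⁻¹' K) := isOpen_interior.sdiff hcl
    have := hop.measure_ne_zero volume ⟨y, hy, hy'⟩
    exact this (measure_mono_null (sdiff_subset_sdiff_left interior_subset) h0)
  have h1 : K ⊆ closure (interior K) := by
    rw [hKc.closure_interior_eq_closure_of_nonempty_interior hinter]
    exact subset_closure
  exact closure_minimal hsub hcl (h1 hx)

/-- Two distinct vectors of equal norm are exchanged by the reflection in their bisector. -/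
lemma exists_refl {a b : EuclideanSpace ℝ (Fin n)} (h : ‖a‖ = ‖b‖) (hab : a ≠ b) :
    ∃ u : EuclideanSpace ℝ (Fin n), ‖u‖ = 1 ∧ reflAlong u a = b := by
  have hd : 0 < ‖a - b‖ := norm_pos_iff.2 (sub_ne_zero.2 hab)
  refine ⟨‖a - b‖⁻¹ • (a - b), ?_, ?_⟩
  · rw [norm_smul, norm_inv, norm_norm, inv_mul_cancel₀ hd.ne']
  · rw [reflAlong, smul_smul, real_inner_smul_right]
    have e : ⟪a, a - b⟫ = ‖a - b‖ ^ 2 / 2 := by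
      rw [norm_sub_sq_real, inner_sub_right, real_inner_self_eq_norm_sq, h]; ring
    rw [e, show 2 * (‖a - b‖⁻¹ * (‖a - b‖ ^ 2 / 2)) * ‖a - b‖⁻¹ = 1 by field_simp]
    module

lemma eq_closedBall_of_refl {K : Set (EuclideanSpace ℝ (Fin n))} (hK : IsCompact K)
    (hKc : Convex ℝ K) (hne : K.Nonempty)
    (h : ∀ u : EuclideanSpace ℝ (Fin n), ‖u‖ = 1 → ∀ x ∈ K, reflAlong u x ∈ K) :
    ∃ r : ℝ, 0 ≤ r ∧ K = closedBall 0 r := by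
  obtain ⟨x0, hx0, hmax⟩ := hK.exists_isMaxOn hne continuous_norm.continuousOn
  have hrot : ∀ y : EuclideanSpace ℝ (Fin n), ‖y‖ = ‖x0‖ → y ∈ K := by
    intro y hy
    by_cases hxy : x0 = y
    · exact hxy ▸ hx0
    · obtain ⟨u, hu, hu2⟩ := exists_refl hy.symm hxy
      exact hu2 ▸ h u hu x0 hx0
  refine ⟨‖x0‖, norm_nonneg _, Subset.antisymm
    (fun x hx => mem_closedBall_zero_iff.2 (hmax hx)) fun y hy => ?_⟩
  rw [mem_closedBall_zero_iff] at hy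
  have key : ∀ y' : EuclideanSpace ℝ (Fin n), ∀ t : ℝ, ‖y'‖ = ‖x0‖ → 0 ≤ t → t ≤ 1 →
      t • y' ∈ K := by
    intro y' t hy' ht0 ht1
    have h1 := hrot y' hy'
    have h2 := hrot (-y') (by rw [norm_neg, hy'])
    have := hKc h1 h2 (by linarith : 0 ≤ (1 + t) / 2) (by linarith : 0 ≤ (1 - t) / 2) (by ring)
    convert this using 1
    module
  by_cases hy0 : y = 0
  · have := key x0 0 rfl le_rfl zero_le_one
    rwa [zero_smul, ← hy0] at this
  · have hyp : 0 < ‖y‖ := norm_pos_iff.2 hy0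
    have hx0p : 0 < ‖x0‖ := hyp.trans_le hy
    have := key ((‖x0‖ / ‖y‖) • y) (‖y‖ / ‖x0‖)
      (by rw [norm_smul, Real.norm_of_nonneg (by positivity)]; field_simp) (by positivity)
      ((div_le_one hx0p).2 hy)
    rwa [smul_smul, show ‖y‖ / ‖x0‖ * (‖x0‖ / ‖y‖) = 1 by field_simp, one_smul] at this

/-- Among convex bodies of given volumes, centred balls minimize the energy. A pair minimizing
the total second moment, among pairs of bodies of these volumes in a fixed ball whose energy does
not exceed that of the given pair, is invariant under the reflections in all hyperplanes through
the origin: otherwise some Steiner symmetrization would lower the second moment. -/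
lemma exists_ball_sineEnergy_le {p : ℝ} (hp : 1 ≤ p) {K L : Set (EuclideanSpace ℝ (Fin n))}
    (hK : IsCompact K) (hKc : Convex ℝ K) (hKv : volume K ≠ 0)
    (hL : IsCompact L) (hLc : Convex ℝ L) (hLv : volume L ≠ 0) :
    ∃ r s : ℝ, 0 ≤ r ∧ 0 ≤ s ∧
      volume (closedBall (0 : EuclideanSpace ℝ (Fin n)) r) = volume K ∧
      volume (closedBall (0 : EuclideanSpace ℝ (Fin n)) s) = volume L ∧
      sineEnergy p (closedBall (0 : EuclideanSpace ℝ (Fin n)) r) (closedBall 0 s)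
        ≤ sineEnergy p K L := by
  have hp0 : 0 ≤ p := by linarith
  have hKne : K.Nonempty := nonempty_of_measure_ne_zero hKv
  have hLne : L.Nonempty := nonempty_of_measure_ne_zero hLv
  obtain ⟨R, hR⟩ := (hK.union hL).isBounded.subset_closedBall (0 : EuclideanSpace ℝ (Fin n))
  have hR0 : 0 ≤ R := by
    obtain ⟨x, hx⟩ := hKne
    exact (norm_nonneg x).trans (mem_closedBall_zero_iff.1 (hR (Or.inl hx)))
  set T := convexIn n R ×ˢ convexIn n R with hT
  have hTc : IsCompact T := (isCompact_convexIn R).prod (isCompact_convexIn R)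
  have hfst : MapsTo Prod.fst T (convexIn n R) := fun P hP => hP.1
  have hsnd : MapsTo Prod.snd T (convexIn n R) := fun P hP => hP.2
  have hvol : ContinuousOn (fun K : NonemptyCompacts (EuclideanSpace ℝ (Fin n)) =>
      volume (K : Set (EuclideanSpace ℝ (Fin n)))) (convexIn n R) := by
    have := continuousOn_setLIntegral (n := n) (R := R) (w := fun _ => 1) (C := 1)
      measurable_const (by norm_num) (fun _ _ => le_rfl)
    simpa only [setLIntegral_one] using this
  have hmom : ContinuousOn (fun K : NonemptyCompacts (EuclideanSpace ℝ (Fin n)) =>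
      secondMoment (K : Set (EuclideanSpace ℝ (Fin n)))) (convexIn n R) := by
    refine continuousOn_setLIntegral (C := ENNReal.ofReal (R ^ 2)) (by fun_prop)
      ENNReal.ofReal_ne_top fun x hx => ENNReal.ofReal_le_ofReal ?_
    have := mem_closedBall_zero_iff.1 hx
    gcongr
  have hc1 := hTc.isClosed
  have hS1 := (hvol.comp continuousOn_fst hfst).preimage_isClosed_of_isClosed hTc.isClosed
    (isClosed_singleton (x := volume K))
  have hS2 := (hvol.comp continuousOn_snd hsnd).preimage_isClosed_of_isClosed hTc.isClosed
    (isClosed_singleton (x := volume L))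
  have hS3 := (continuousOn_sineEnergy (n := n) hp0 hR0).preimage_isClosed_of_isClosed
    hTc.isClosed (isClosed_Iic (a := sineEnergy p K L))
  set S := T ∩ {P | volume (P.1 : Set (EuclideanSpace ℝ (Fin n))) = volume K ∧
    volume (P.2 : Set (EuclideanSpace ℝ (Fin n))) = volume L ∧
    sineEnergy p (P.1 : Set (EuclideanSpace ℝ (Fin n))) P.2 ≤ sineEnergy p K L} with hS
  have hSc : IsCompact S := by
    refine hTc.of_isClosed_subset ?_ inter_subset_left
    convert (hS1.inter hS2).inter hS3 using 1
    ext P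
    simp only [hS, mem_inter_iff, mem_ofPred_eq, mem_preimage, mem_singleton_iff, mem_Iic,
      Function.comp]
    tauto
  have hSne : S.Nonempty := by
    refine ⟨(⟨⟨K, hK⟩, hKne⟩, ⟨⟨L, hL⟩, hLne⟩), ⟨⟨?_, hKc⟩, ⟨?_, hLc⟩⟩, rfl, rfl, le_rfl⟩
    · exact subset_union_left.trans hR
    · exact subset_union_right.trans hR
  have hcont : ContinuousOn (fun P : NonemptyCompacts (EuclideanSpace ℝ (Fin n)) ×
      NonemptyCompacts (EuclideanSpace ℝ (Fin n)) =>
      secondMoment (P.1 : Set (EuclideanSpace ℝ (Fin n))) +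
      secondMoment (P.2 : Set (EuclideanSpace ℝ (Fin n)))) S :=
    ((hmom.comp continuousOn_fst hfst).add (hmom.comp continuousOn_snd hsnd)).mono inter_subset_left
  obtain ⟨⟨A, B⟩, ⟨⟨⟨hAR, hAc⟩, ⟨hBR, hBc⟩⟩, hAv, hBv, hAB⟩, hmin⟩ := hSc.exists_isMinOn hSne hcont
  simp only at hAR hAc hBR hBc hAv hBv hAB
  have hsym : ∀ u : EuclideanSpace ℝ (Fin n), ‖u‖ = 1 →
      secondMoment (A : Set (EuclideanSpace ℝ (Fin n))) ≤ secondMoment (steiner u A) ∧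
      secondMoment (B : Set (EuclideanSpace ℝ (Fin n))) ≤ secondMoment (steiner u B) := by
    intro u hu
    have hmem : ((⟨⟨steiner u A, isCompact_steiner u A.isCompact⟩, steiner_nonempty u A.nonempty⟩,
        ⟨⟨steiner u B, isCompact_steiner u B.isCompact⟩, steiner_nonempty u B.nonempty⟩) :
        NonemptyCompacts (EuclideanSpace ℝ (Fin n)) ×
          NonemptyCompacts (EuclideanSpace ℝ (Fin n))) ∈ S := by
      refine ⟨⟨⟨steiner_subset_closedBall hu hAR, convex_steiner u hAc⟩,
        ⟨steiner_subset_closedBall hu hBR, convex_steiner u hBc⟩⟩, ?_, ?_, ?_⟩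
      · exact (volume_steiner hu A.isCompact hAc).trans hAv
      · exact (volume_steiner hu B.isCompact hBc).trans hBv
      · exact (sineEnergy_steiner_le hp hu A.isCompact hAc B.isCompact hBc).trans hAB
    have h1 : secondMoment (A : Set (EuclideanSpace ℝ (Fin n))) +
        secondMoment (B : Set (EuclideanSpace ℝ (Fin n))) ≤
        secondMoment (steiner u A) + secondMoment (steiner u B) := hmin hmem
    have h2 := secondMoment_steiner_le hu A.isCompact hAc
    have h3 := secondMoment_steiner_le hu B.isCompact hBc
    have f1 := (secondMoment_lt_top A.isCompact).ne
    have f2 := (secondMoment_lt_top B.isCompact).ne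
    constructor
    · exact (ENNReal.add_le_add_iff_right f2).1 (h1.trans (add_le_add le_rfl h3))
    · exact (ENNReal.add_le_add_iff_left f1).1 (h1.trans (add_le_add h2 le_rfl))
  obtain ⟨r, hr, hAr⟩ := eq_closedBall_of_refl A.isCompact hAc A.nonempty fun u hu x hx =>
    reflAlong_mem hu A.isCompact hAc (hAv ▸ hKv) (hsym u hu).1 hx
  obtain ⟨s, hs, hBs⟩ := eq_closedBall_of_refl B.isCompact hBc B.nonempty fun u hu x hx =>
    reflAlong_mem hu B.isCompact hBc (hBv ▸ hLv) (hsym u hu).2 hx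
  exact ⟨r, s, hr, hs, hAr ▸ hAv, hBs ▸ hBv, by rw [← hAr, ← hBs]; exact hAB⟩

end

section
variable {n : ℕ}

/-! ### Polar coordinates -/

lemma lintegral_polar (hn : 1 ≤ n) {F : EuclideanSpace ℝ (Fin n) → ℝ≥0∞} (hF : Measurable F) :
    ∫⁻ x, F x = ∫⁻ u : sphere (0 : EuclideanSpace ℝ (Fin n)) 1,
      (∫⁻ r in Ioi (0 : ℝ), ENNReal.ofReal (r ^ (n - 1)) * F (r • (u : EuclideanSpace ℝ (Fin n))))
      ∂(volume : Measure (EuclideanSpace ℝ (Fin n))).toSphere := by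
  have : Nonempty (Fin n) := ⟨⟨0, hn⟩⟩
  let E := EuclideanSpace ℝ (Fin n)
  have hmp := (volume : Measure E).measurePreserving_homeomorphUnitSphereProd
  have hdim : Module.finrank ℝ E = n := by simp [E]
  rw [hdim] at hmp
  have h1 : ∫⁻ x, F x = ∫⁻ x in ({0}ᶜ : Set E), F x := by
    rw [restrict_compl_singleton]
  have hme := (homeomorphUnitSphereProd E).measurableEmbedding
  rw [h1, ← lintegral_subtype_comap (measurableSet_singleton _).compl]
  have h2 := hmp.lintegral_comp_emb hme
    (fun q => F ((homeomorphUnitSphereProd E).symm q : E))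
  simp only [Homeomorph.symm_apply_apply] at h2
  have hmF : Measurable (fun q : sphere (0 : E) 1 × Ioi (0 : ℝ) =>
      F ((homeomorphUnitSphereProd E).symm q : E)) :=
    hF.comp (measurable_subtype_coe.comp (homeomorphUnitSphereProd E).symm.measurable)
  rw [h2, lintegral_prod _ hmF.aemeasurable]
  refine lintegral_congr fun u => ?_
  have hmr : Measurable (fun r : Ioi (0 : ℝ) => F ((r : ℝ) • (u : E))) :=
    hF.comp (measurable_subtype_coe.smul_const _)
  rw [← lintegral_subtype_comap measurableSet_Ioi]
  simp only [homeomorphUnitSphereProd_symm_apply_coe]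
  rw [Measure.volumeIoiPow, lintegral_withDensity_eq_lintegral_mul _ (by fun_prop) hmr]
  rfl

lemma lintegral_Ioc_rpow {a b : ℝ} (ha : 0 < a) (hb : 0 ≤ b) :
    ∫⁻ r in Ioc (0 : ℝ) b, ENNReal.ofReal (r ^ (a - 1)) = ENNReal.ofReal (b ^ a / a) := by
  have hinter := intervalIntegral.intervalIntegrable_rpow' (a := 0) (b := b) (r := a - 1) (by linarith)
  rw [intervalIntegrable_iff_integrableOn_Ioc_of_le hb] at hinter
  rw [← ofReal_integral_eq_lintegral_ofReal hinter, ← intervalIntegral.integral_of_le hb,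
    integral_rpow (Or.inl (by linarith))]
  · simp [Real.zero_rpow ha.ne']
  · filter_upwards [ae_restrict_mem measurableSet_Ioc] with r hr
    exact Real.rpow_nonneg hr.1.le _

/-- Integration of a `p`-homogeneous function over a star-shaped set with radial function `ρ`. -/
lemma setLIntegral_gauge (hn : 1 ≤ n) {p : ℝ} (hp : 0 ≤ p)
    {h : EuclideanSpace ℝ (Fin n) → ℝ≥0∞} (hh : Measurable h)
    (hhom : ∀ r : ℝ, 0 < r → ∀ x, h (r • x) = ENNReal.ofReal (r ^ p) * h x)
    {K : Set (EuclideanSpace ℝ (Fin n))} (hK : MeasurableSet K)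
    {ρ : sphere (0 : EuclideanSpace ℝ (Fin n)) 1 → ℝ} (hρ : ∀ u, 0 ≤ ρ u)
    (hKρ : ∀ r : ℝ, 0 < r → ∀ u : sphere (0 : EuclideanSpace ℝ (Fin n)) 1,
      (r • (u : EuclideanSpace ℝ (Fin n)) ∈ K ↔ r ≤ ρ u)) :
    ∫⁻ x in K, h x = ∫⁻ u : sphere (0 : EuclideanSpace ℝ (Fin n)) 1,
      h u * ENNReal.ofReal (ρ u ^ ((n : ℝ) + p) / ((n : ℝ) + p))
        ∂(volume : Measure (EuclideanSpace ℝ (Fin n))).toSphere := by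
  rw [← lintegral_indicator hK, lintegral_polar hn (hh.indicator hK)]
  refine lintegral_congr fun u => ?_
  have hn' : (1 : ℝ) ≤ n := by exact_mod_cast hn
  have h1 : ∀ r ∈ Ioi (0 : ℝ), ENNReal.ofReal (r ^ (n - 1)) *
      K.indicator h (r • (u : EuclideanSpace ℝ (Fin n)))
      = (Ioc 0 (ρ u)).indicator (fun r => ENNReal.ofReal (r ^ ((n : ℝ) + p - 1)) * h u) r := by
    intro r hr
    have hr : 0 < r := hr
    by_cases hm : r ≤ ρ u
    · rw [indicator_of_mem ((hKρ r hr u).2 hm), indicator_of_mem (show r ∈ Ioc 0 (ρ u) from ⟨hr, hm⟩),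
        hhom r hr, ← mul_assoc, ← ENNReal.ofReal_mul (by positivity)]
      congr 2
      rw [← Real.rpow_natCast, ← Real.rpow_add hr, Nat.cast_sub hn]
      congr 1; push_cast; ring
    · rw [indicator_of_notMem (fun hk => hm ((hKρ r hr u).1 hk)),
        indicator_of_notMem (fun hk => hm hk.2), mul_zero]
  rw [setLIntegral_congr_fun measurableSet_Ioi h1, lintegral_indicator measurableSet_Ioc,
    Measure.restrict_restrict measurableSet_Ioc,
    inter_eq_left.2 (Ioc_subset_Ioi_self : Ioc 0 (ρ u) ⊆ Ioi 0), lintegral_mul_const _ (by fun_prop),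
    lintegral_Ioc_rpow (by linarith) (hρ u), mul_comm]

end

section
variable {n : ℕ}

/-! ### The spherical sine transform -/

lemma toSphere_univ_pos (hn : 1 ≤ n) :
    (volume : Measure (EuclideanSpace ℝ (Fin n))).toSphere univ ≠ 0 := by
  have : Nonempty (Fin n) := ⟨⟨0, hn⟩⟩
  rw [Measure.measure_univ_ne_zero]
  exact Measure.toSphere_ne_zero _

lemma isProbabilityMeasure_sphereProb (hn : 1 ≤ n) : IsProbabilityMeasure (sphereProb n) := by
  constructor
  rw [sphereProb, Measure.smul_apply, smul_eq_mul]
  exact ENNReal.inv_mul_cancel (toSphere_univ_pos hn) (measure_ne_top _ _)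

/-- The surface area of the unit sphere. -/
def sphereArea (n : ℕ) : ℝ := (volume : Measure (EuclideanSpace ℝ (Fin n))).toSphere.real univ

lemma sphereArea_pos (hn : 1 ≤ n) : 0 < sphereArea n :=
  ENNReal.toReal_pos (toSphere_univ_pos hn) (measure_ne_top _ _)

lemma toSphere_eq_smul (hn : 1 ≤ n) : (volume : Measure (EuclideanSpace ℝ (Fin n))).toSphere
    = ENNReal.ofReal (sphereArea n) • sphereProb n := by
  rw [sphereProb, smul_smul, sphereArea, ofReal_measureReal,
    ENNReal.mul_inv_cancel (toSphere_univ_pos hn) (measure_ne_top _ _), one_smul]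

lemma lintegral_toSphere (hn : 1 ≤ n) {h : sphere (0 : EuclideanSpace ℝ (Fin n)) 1 → ℝ}
    (hh : Integrable h (sphereProb n)) (h0 : ∀ u, 0 ≤ h u) :
    ∫⁻ u, ENNReal.ofReal (h u) ∂(volume : Measure (EuclideanSpace ℝ (Fin n))).toSphere
      = ENNReal.ofReal (sphereArea n * ∫ u, h u ∂(sphereProb n)) := by
  rw [toSphere_eq_smul hn, lintegral_smul_measure, smul_eq_mul,
    ENNReal.ofReal_mul (sphereArea_pos hn).le,
    ofReal_integral_eq_lintegral_ofReal hh (Filter.Eventually.of_forall h0)]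

lemma integrable_of_continuous (hn : 1 ≤ n) {h : sphere (0 : EuclideanSpace ℝ (Fin n)) 1 → ℝ}
    (hh : Continuous h) : Integrable h (sphereProb n) := by
  have := isProbabilityMeasure_sphereProb hn
  exact hh.integrable_of_hasCompactSupport (HasCompactSupport.of_compactSpace h)

/-- The `L_p` sine transform `x ↦ ∫ [x,v]^p g(v) dv` of a function on the sphere. -/
def sineTrans (p : ℝ) (g : sphere (0 : EuclideanSpace ℝ (Fin n)) 1 → ℝ)
    (x : EuclideanSpace ℝ (Fin n)) : ℝ :=
  ∫ v : sphere (0 : EuclideanSpace ℝ (Fin n)) 1,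
    sinePair x (v : EuclideanSpace ℝ (Fin n)) ^ p * g v ∂(sphereProb n)

section
variable {p : ℝ} {g : sphere (0 : EuclideanSpace ℝ (Fin n)) 1 → ℝ}

lemma sinePair_rpow_le (hp : 0 ≤ p) (x : EuclideanSpace ℝ (Fin n))
    (v : sphere (0 : EuclideanSpace ℝ (Fin n)) 1) : sinePair x v ^ p ≤ ‖x‖ ^ p := by
  refine Real.rpow_le_rpow (sinePair_nonneg _ _) ((sinePair_le _ _).trans ?_) hp
  rw [norm_eq_of_mem_sphere, mul_one]

lemma continuous_sineSlice (hp : 0 ≤ p) (x : EuclideanSpace ℝ (Fin n)) :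
    Continuous fun v : sphere (0 : EuclideanSpace ℝ (Fin n)) 1 =>
      sinePair x (v : EuclideanSpace ℝ (Fin n)) ^ p :=
  (continuous_sinePair_rpow hp).comp
    (f := fun v : sphere (0 : EuclideanSpace ℝ (Fin n)) 1 => (x, (v : EuclideanSpace ℝ (Fin n))))
    (continuous_const.prodMk continuous_subtype_val)

lemma integrable_sineTrans (hp : 0 ≤ p) (hg : Integrable g (sphereProb n))
    (x : EuclideanSpace ℝ (Fin n)) :
    Integrable (fun v : sphere (0 : EuclideanSpace ℝ (Fin n)) 1 =>
      sinePair x (v : EuclideanSpace ℝ (Fin n)) ^ p * g v) (sphereProb n) := by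
  refine hg.bdd_mul (c := ‖x‖ ^ p) (continuous_sineSlice hp x).aestronglyMeasurable
    (Filter.Eventually.of_forall fun v => ?_)
  rw [Real.norm_of_nonneg (Real.rpow_nonneg (sinePair_nonneg _ _) _)]
  exact sinePair_rpow_le hp x v

lemma sineTrans_nonneg (hg0 : ∀ u, 0 ≤ g u) (x : EuclideanSpace ℝ (Fin n)) :
    0 ≤ sineTrans p g x :=
  integral_nonneg fun v => mul_nonneg (Real.rpow_nonneg (sinePair_nonneg _ _) _) (hg0 v)

lemma sineTrans_smul {r : ℝ} (hr : 0 ≤ r) (x : EuclideanSpace ℝ (Fin n)) :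
    sineTrans p g (r • x) = r ^ p * sineTrans p g x := by
  rw [sineTrans, sineTrans, ← integral_const_mul]
  refine integral_congr_ae (Filter.Eventually.of_forall fun v => ?_)
  simp only
  rw [sinePair_smul_left, abs_of_nonneg hr, Real.mul_rpow hr (sinePair_nonneg _ _), mul_assoc]

lemma continuous_sineTrans (hp : 0 ≤ p) (hg : Integrable g (sphereProb n)) :
    Continuous (sineTrans p g) := by
  rw [continuous_iff_continuousAt]
  intro x₀
  refine continuousAt_of_dominated (bound := fun v => (‖x₀‖ + 1) ^ p * |g v|)
    (Filter.Eventually.of_forall fun x => (integrable_sineTrans hp hg x).aestronglyMeasurable)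
    ?_ (hg.abs.const_mul _) (Filter.Eventually.of_forall fun v => ?_)
  · filter_upwards [ball_mem_nhds x₀ one_pos] with x hx
    refine Filter.Eventually.of_forall fun v => ?_
    rw [norm_mul, Real.norm_of_nonneg (Real.rpow_nonneg (sinePair_nonneg _ _) _), Real.norm_eq_abs]
    refine mul_le_mul_of_nonneg_right ((sinePair_rpow_le hp x v).trans ?_) (abs_nonneg _)
    refine Real.rpow_le_rpow (norm_nonneg _) ?_ hp
    have := norm_sub_norm_le x x₀
    rw [mem_ball_iff_norm] at hx
    linarith
  · exact (((continuous_sinePair_rpow hp).comp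
      (continuous_id.prodMk continuous_const)).mul continuous_const).continuousAt

lemma convexOn_sineTrans (hp : 1 ≤ p) (hg0 : ∀ u, 0 ≤ g u) (hg : Integrable g (sphereProb n)) :
    ConvexOn ℝ univ (sineTrans p g) := by
  have hp0 : 0 ≤ p := zero_le_one.trans hp
  refine ⟨convex_univ, fun x _ z _ a b ha hb hab => ?_⟩
  simp only [smul_eq_mul, sineTrans]
  rw [← integral_const_mul, ← integral_const_mul,
    ← integral_add ((integrable_sineTrans hp0 hg x).const_mul a)
      ((integrable_sineTrans hp0 hg z).const_mul b)]
  refine integral_mono (integrable_sineTrans hp0 hg _)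
    (((integrable_sineTrans hp0 hg x).const_mul a).add
      ((integrable_sineTrans hp0 hg z).const_mul b)) fun v => ?_
  have h1 := Real.rpow_le_rpow (sinePair_nonneg _ _) (sinePair_convex x z v ha hb) hp0
  have h2 := (convexOn_rpow hp).2 (sinePair_nonneg x v) (sinePair_nonneg z v) ha hb hab
  simp only [smul_eq_mul] at h2
  have := mul_le_mul_of_nonneg_right (h1.trans h2) (hg0 v)
  linarith

open scoped Pointwise in
/-- In dimension at least two the sphere meets every line in a null set. -/
lemma ae_sinePair_ne_zero (hn : 2 ≤ n) (u : sphere (0 : EuclideanSpace ℝ (Fin n)) 1) :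
    ∀ᵐ v : sphere (0 : EuclideanSpace ℝ (Fin n)) 1 ∂(sphereProb n),
      sinePair (u : EuclideanSpace ℝ (Fin n)) v ≠ 0 := by
  have hms : MeasurableSet {v : sphere (0 : EuclideanSpace ℝ (Fin n)) 1 |
      sinePair (u : EuclideanSpace ℝ (Fin n)) v = 0} :=
    measurableSet_eq_fun ((continuous_sinePair.comp
      (continuous_const.prodMk continuous_subtype_val)).measurable) measurable_const
  have hsub : Ioo (0 : ℝ) 1 • ((↑) '' {v : sphere (0 : EuclideanSpace ℝ (Fin n)) 1 |
      sinePair (u : EuclideanSpace ℝ (Fin n)) v = 0}) ⊆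
      ((ℝ ∙ (u : EuclideanSpace ℝ (Fin n)) : Submodule ℝ (EuclideanSpace ℝ (Fin n))) :
        Set (EuclideanSpace ℝ (Fin n))) := by
    rintro _ ⟨r, -, _, ⟨v, hv, rfl⟩, rfl⟩
    refine Submodule.smul_mem _ _ ?_
    have h0 := sinePair_sq (u : EuclideanSpace ℝ (Fin n)) v
    have hu := norm_eq_of_mem_sphere u
    have hv1 := norm_eq_of_mem_sphere v
    rw [show sinePair (u : EuclideanSpace ℝ (Fin n)) v = 0 from hv, hu, hv1] at h0
    rw [Submodule.mem_span_singleton]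
    refine ⟨⟪(u : EuclideanSpace ℝ (Fin n)), (v : EuclideanSpace ℝ (Fin n))⟫, ?_⟩
    rw [← sub_eq_zero, ← norm_eq_zero, ← sq_eq_zero_iff, norm_sub_sq_real, norm_smul, hu, hv1,
      real_inner_smul_left, Real.norm_eq_abs, mul_one, sq_abs]
    nlinarith
  have hne : (ℝ ∙ (u : EuclideanSpace ℝ (Fin n)) : Submodule ℝ (EuclideanSpace ℝ (Fin n))) ≠ ⊤ := by
    intro h
    have h1 := finrank_span_singleton (K := ℝ) (v := (u : EuclideanSpace ℝ (Fin n)))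
      (fun h => by have := norm_eq_of_mem_sphere u; rw [h, norm_zero] at this; norm_num at this)
    rw [h, finrank_top, finrank_euclideanSpace_fin] at h1
    omega
  have h0 : (volume : Measure (EuclideanSpace ℝ (Fin n))).toSphere
      {v : sphere (0 : EuclideanSpace ℝ (Fin n)) 1 |
      sinePair (u : EuclideanSpace ℝ (Fin n)) v = 0} = 0 := by
    rw [Measure.toSphere_apply' _ hms, measure_mono_null hsub (Measure.addHaar_submodule _ _ hne),
      mul_zero]
  rw [ae_iff]
  simp only [not_not, sphereProb, Measure.smul_apply, smul_eq_mul]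
  rw [h0, mul_zero]

lemma sineTrans_pos (hn : 2 ≤ n) (hp : 0 ≤ p) (hg0 : ∀ u, 0 ≤ g u)
    (hg : Integrable g (sphereProb n)) (hgne : ¬ g =ᵐ[sphereProb n] 0)
    (u : sphere (0 : EuclideanSpace ℝ (Fin n)) 1) : 0 < sineTrans p g u := by
  refine lt_of_le_of_ne (sineTrans_nonneg hg0 _) fun h => hgne ?_
  have h1 := (integral_eq_zero_iff_of_nonneg (fun v => mul_nonneg
    (Real.rpow_nonneg (sinePair_nonneg _ _) _) (hg0 v)) (integrable_sineTrans hp hg u)).1 h.symm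
  filter_upwards [h1, ae_sinePair_ne_zero hn u] with v hv hv'
  have : 0 < sinePair (u : EuclideanSpace ℝ (Fin n)) v ^ p :=
    Real.rpow_pos_of_pos (lt_of_le_of_ne (sinePair_nonneg _ _) hv'.symm) _
  exact (mul_eq_zero.1 hv).resolve_left this.ne'

/-! ### The convex body of a density -/

/-- The radial function of `{sineTrans p g ≤ 1}`. -/
def sineRadial (p : ℝ) (g : sphere (0 : EuclideanSpace ℝ (Fin n)) 1 → ℝ)
    (u : sphere (0 : EuclideanSpace ℝ (Fin n)) 1) : ℝ := sineTrans p g u ^ (-1 / p)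

lemma mem_sineBody_iff (hp : 0 < p)
    (hpos : ∀ u : sphere (0 : EuclideanSpace ℝ (Fin n)) 1, 0 < sineTrans p g u)
    {r : ℝ} (hr : 0 < r) (u : sphere (0 : EuclideanSpace ℝ (Fin n)) 1) :
    r • (u : EuclideanSpace ℝ (Fin n)) ∈ {x | sineTrans p g x ≤ 1} ↔ r ≤ sineRadial p g u := by
  change sineTrans p g (r • (u : EuclideanSpace ℝ (Fin n))) ≤ 1 ↔ _
  rw [sineTrans_smul hr.le, sineRadial, ← le_div_iff₀ (hpos u), one_div,
    show -1 / p = -1 * p⁻¹ by ring, Real.rpow_mul (hpos u).le, Real.rpow_neg_one]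
  rw [Real.le_rpow_inv_iff_of_pos hr.le (inv_nonneg.2 (hpos u).le) hp]

lemma sineRadial_pos
    (hpos : ∀ u : sphere (0 : EuclideanSpace ℝ (Fin n)) 1, 0 < sineTrans p g u)
    (u : sphere (0 : EuclideanSpace ℝ (Fin n)) 1) : 0 < sineRadial p g u :=
  Real.rpow_pos_of_pos (hpos u) _

lemma sineRadial_rpow
    (hpos : ∀ u : sphere (0 : EuclideanSpace ℝ (Fin n)) 1, 0 < sineTrans p g u) (a : ℝ)
    (u : sphere (0 : EuclideanSpace ℝ (Fin n)) 1) :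
    sineRadial p g u ^ a = sineTrans p g u ^ (-a / p) := by
  rw [sineRadial, ← Real.rpow_mul (hpos u).le]
  congr 1; ring

lemma continuous_sineRadial (hp : 0 ≤ p) (hg : Integrable g (sphereProb n))
    (hpos : ∀ u : sphere (0 : EuclideanSpace ℝ (Fin n)) 1, 0 < sineTrans p g u) :
    Continuous (sineRadial p g) :=
  ((continuous_sineTrans hp hg).comp continuous_subtype_val).rpow_const fun u =>
    Or.inl (hpos u).ne'

lemma convex_sineBody (hp : 1 ≤ p) (hg0 : ∀ u, 0 ≤ g u) (hg : Integrable g (sphereProb n)) :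
    Convex ℝ {x | sineTrans p g x ≤ 1} := by
  simpa using (convexOn_sineTrans hp hg0 hg).convex_le 1

lemma isCompact_sineBody (hp : 0 < p) (hg : Integrable g (sphereProb n))
    (hpos : ∀ u : sphere (0 : EuclideanSpace ℝ (Fin n)) 1, 0 < sineTrans p g u) :
    IsCompact {x | sineTrans p g x ≤ 1} := by
  refine Metric.isCompact_of_isClosed_isBounded
    (isClosed_le (continuous_sineTrans hp.le hg) continuous_const) ?_
  obtain ⟨R, hR⟩ := (isCompact_range (continuous_sineRadial hp.le hg hpos)).bddAbove
  rw [isBounded_iff_forall_norm_le]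
  refine ⟨max R 0, fun x hx => ?_⟩
  rcases eq_or_ne x 0 with rfl | hx0
  · simp
  · have hxn : 0 < ‖x‖ := norm_pos_iff.2 hx0
    let u : sphere (0 : EuclideanSpace ℝ (Fin n)) 1 := ⟨‖x‖⁻¹ • x, by
      rw [mem_sphere_zero_iff_norm, norm_smul, norm_inv, norm_norm, inv_mul_cancel₀ hxn.ne']⟩
    have hxu : ‖x‖ • (u : EuclideanSpace ℝ (Fin n)) = x := by
      simp only [u]; rw [smul_smul, mul_inv_cancel₀ hxn.ne', one_smul]
    have := (mem_sineBody_iff hp hpos hxn u).1 (by rw [hxu]; exact hx)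
    exact this.trans ((hR ⟨u, rfl⟩).trans (le_max_left _ _))
end

end

section
variable {n : ℕ}

/-! ### Volume and energy in terms of radial functions -/

section
variable {p : ℝ} {K L : Set (EuclideanSpace ℝ (Fin n))}
  {ρ τ : sphere (0 : EuclideanSpace ℝ (Fin n)) 1 → ℝ}

lemma volume_radial (hn : 1 ≤ n) (hK : MeasurableSet K) (hρc : Continuous ρ) (hρ : ∀ u, 0 ≤ ρ u)
    (hKρ : ∀ r : ℝ, 0 < r → ∀ u : sphere (0 : EuclideanSpace ℝ (Fin n)) 1,
      (r • (u : EuclideanSpace ℝ (Fin n)) ∈ K ↔ r ≤ ρ u)) :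
    volume K = ENNReal.ofReal (sphereArea n / n * ∫ u, ρ u ^ (n : ℝ) ∂(sphereProb n)) := by
  have h := setLIntegral_gauge hn le_rfl (h := fun _ => 1) measurable_const
    (fun r hr x => by simp) hK hρ hKρ
  rw [setLIntegral_one] at h
  simp only [one_mul, add_zero] at h
  have hc : Continuous fun u => ρ u ^ (n : ℝ) / (n : ℝ) :=
    (hρc.rpow_const fun u => Or.inr (Nat.cast_nonneg n)).div_const _
  rw [h, lintegral_toSphere hn (integrable_of_continuous hn hc)
    (fun u => div_nonneg (Real.rpow_nonneg (hρ u) _) (Nat.cast_nonneg n)), integral_div]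
  congr 1; ring

lemma setLIntegral_sineKer (hn : 1 ≤ n) (hp : 0 ≤ p) (hK : MeasurableSet K) (hρc : Continuous ρ)
    (hρ : ∀ u, 0 ≤ ρ u)
    (hKρ : ∀ r : ℝ, 0 < r → ∀ u : sphere (0 : EuclideanSpace ℝ (Fin n)) 1,
      (r • (u : EuclideanSpace ℝ (Fin n)) ∈ K ↔ r ≤ ρ u)) (y : EuclideanSpace ℝ (Fin n)) :
    ∫⁻ x in K, sineKer p y x = ENNReal.ofReal (sphereArea n / (n + p) *
      sineTrans p (fun u => ρ u ^ ((n : ℝ) + p)) y) := by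
  have hn' : (0 : ℝ) ≤ n + p := by positivity
  rw [setLIntegral_gauge hn hp (h := fun x => sineKer p y x)
    ((continuous_sineKer hp).comp (f := fun x => (y, x)) (by fun_prop)).measurable
    (fun r hr x => ?_) hK hρ hKρ]
  · have hc : Continuous fun u : sphere (0 : EuclideanSpace ℝ (Fin n)) 1 => ρ u ^ ((n : ℝ) + p) :=
      hρc.rpow_const fun u => Or.inr hn'
    have hi := (integrable_sineTrans hp (integrable_of_continuous hn hc) y).div_const ((n : ℝ) + p)
    have := lintegral_toSphere hn hi (fun u => div_nonneg (mul_nonneg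
      (Real.rpow_nonneg (sinePair_nonneg _ _) _) (Real.rpow_nonneg (hρ u) _)) hn')
    rw [integral_div] at this
    rw [show sphereArea n / (n + p) * sineTrans p (fun u => ρ u ^ ((n : ℝ) + p)) y
      = sphereArea n * ((∫ u : sphere (0 : EuclideanSpace ℝ (Fin n)) 1,
          sinePair y u ^ p * ρ u ^ ((n : ℝ) + p) ∂(sphereProb n)) / (n + p)) by
        rw [sineTrans]; ring, ← this]
    refine lintegral_congr fun u => ?_
    rw [sineKer, ← ENNReal.ofReal_mul (Real.rpow_nonneg (sinePair_nonneg _ _) _), mul_div_assoc]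
  · rw [sineKer, sineKer, sinePair_comm y, sinePair_smul_left, abs_of_pos hr,
      Real.mul_rpow hr.le (sinePair_nonneg _ _), ENNReal.ofReal_mul (Real.rpow_nonneg hr.le _),
      sinePair_comm x]

lemma sineEnergy_radial (hn : 1 ≤ n) (hp : 0 ≤ p)
    (hK : MeasurableSet K) (hρc : Continuous ρ) (hρ : ∀ u, 0 ≤ ρ u)
    (hKρ : ∀ r : ℝ, 0 < r → ∀ u : sphere (0 : EuclideanSpace ℝ (Fin n)) 1,
      (r • (u : EuclideanSpace ℝ (Fin n)) ∈ K ↔ r ≤ ρ u))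
    (hL : MeasurableSet L) (hτc : Continuous τ) (hτ : ∀ u, 0 ≤ τ u)
    (hLτ : ∀ r : ℝ, 0 < r → ∀ u : sphere (0 : EuclideanSpace ℝ (Fin n)) 1,
      (r • (u : EuclideanSpace ℝ (Fin n)) ∈ L ↔ r ≤ τ u)) :
    sineEnergy p L K = ENNReal.ofReal ((sphereArea n / (n + p)) ^ 2 *
      ∫ v, sineTrans p (fun u => ρ u ^ ((n : ℝ) + p)) v * τ v ^ ((n : ℝ) + p) ∂(sphereProb n)) := by
  have hn' : (0 : ℝ) ≤ n + p := by positivity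
  have hA := (sphereArea_pos hn).le
  have hc : Continuous fun u : sphere (0 : EuclideanSpace ℝ (Fin n)) 1 => ρ u ^ ((n : ℝ) + p) :=
      hρc.rpow_const fun u => Or.inr hn'
  have hcT := continuous_sineTrans hp (integrable_of_continuous hn hc)
  have hT0 := fun y => sineTrans_nonneg (p := p) (fun u => Real.rpow_nonneg (hρ u) ((n : ℝ) + p)) y
  rw [sineEnergy, lintegral_congr (setLIntegral_sineKer hn hp hK hρc hρ hKρ),
    setLIntegral_gauge hn hp (h := fun y => ENNReal.ofReal (sphereArea n / (n + p) *
      sineTrans p (fun u => ρ u ^ ((n : ℝ) + p)) y))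
      (hcT.measurable.const_mul _).ennreal_ofReal (fun r hr x => ?_) hL hτ hLτ]
  · have hc2 : Continuous fun v : sphere (0 : EuclideanSpace ℝ (Fin n)) 1 =>
        sphereArea n / (n + p) / (n + p) * (sineTrans p (fun u => ρ u ^ ((n : ℝ) + p)) v *
          τ v ^ ((n : ℝ) + p)) :=
      ((hcT.comp continuous_subtype_val).mul (hτc.rpow_const fun u => Or.inr hn')).const_mul _
    have := lintegral_toSphere hn (integrable_of_continuous hn hc2) (fun u => mul_nonneg
      (by positivity) (mul_nonneg (hT0 _) (Real.rpow_nonneg (hτ u) _)))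
    rw [integral_const_mul] at this
    rw [show ∀ I : ℝ, (sphereArea n / (n + p)) ^ 2 * I
      = sphereArea n * (sphereArea n / (n + p) / (n + p) * I) by intro I; ring, ← this]
    refine lintegral_congr fun u => ?_
    rw [← ENNReal.ofReal_mul (mul_nonneg (by positivity) (hT0 _))]
    congr 1; ring
  · rw [sineTrans_smul hr.le, ← ENNReal.ofReal_mul (Real.rpow_nonneg hr.le _)]
    congr 1; ring

lemma mem_closedBall_radial {s : ℝ} (r : ℝ) (hr : 0 < r)
    (u : sphere (0 : EuclideanSpace ℝ (Fin n)) 1) :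
    r • (u : EuclideanSpace ℝ (Fin n)) ∈ closedBall (0 : EuclideanSpace ℝ (Fin n)) s ↔ r ≤ s := by
  rw [mem_closedBall_zero_iff, norm_smul, norm_eq_of_mem_sphere, mul_one, Real.norm_of_nonneg hr.le]
end

/-! ### The reverse Hölder inequality -/

/-- The inequality `‖f‖_q ≤ (∫ f G) (∫ G^{-n/p})^{p/n}`, which is Hölder's inequality for
`f^q = (f G)^q · G^{-q}` with `q = n/(n+p)`. -/
lemma reverse_holder (hn : 1 ≤ n) {p : ℝ} (hp : 0 < p)
    {f G : sphere (0 : EuclideanSpace ℝ (Fin n)) 1 → ℝ} (hf0 : ∀ u, 0 ≤ f u)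
    (hf : Integrable f (sphereProb n)) (hG : Continuous G) (hGpos : ∀ u, 0 < G u) :
    (∫ u, f u ^ ((n : ℝ) / (n + p)) ∂(sphereProb n)) ^ (((n : ℝ) + p) / n) ≤
      (∫ u, f u * G u ∂(sphereProb n)) *
        (∫ u, G u ^ (-(n : ℝ) / p) ∂(sphereProb n)) ^ (p / n) := by
  have := isProbabilityMeasure_sphereProb hn
  have hn0 : (0 : ℝ) < n := by exact_mod_cast hn
  have hconj : (((n : ℝ) + p) / n).HolderConjugate (((n : ℝ) + p) / p) := by
    rw [Real.holderConjugate_iff]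
    refine ⟨by rw [lt_div_iff₀ hn0]; linarith, by field_simp⟩
  have hfG : Integrable (fun u => f u * G u) (sphereProb n) := by
    obtain ⟨C, hC⟩ := (isCompact_range hG).isBounded.exists_norm_le
    exact hf.mul_bdd (c := C) hG.aestronglyMeasurable
      (Filter.Eventually.of_forall fun u => hC _ ⟨u, rfl⟩)
  have hA : ∀ u, ((f u * G u) ^ ((n : ℝ) / (n + p))) ^ (((n : ℝ) + p) / n) = f u * G u := fun u => by
    rw [← Real.rpow_mul (mul_nonneg (hf0 u) (hGpos u).le)]
    rw [show (n : ℝ) / (n + p) * ((n + p) / n) = 1 by field_simp, Real.rpow_one]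
  have hB : ∀ u, (G u ^ (-(n : ℝ) / (n + p))) ^ (((n : ℝ) + p) / p) = G u ^ (-(n : ℝ) / p) := fun u => by
    rw [← Real.rpow_mul (hGpos u).le]
    congr 1; field_simp
  have hA0 : ∀ u, 0 ≤ (f u * G u) ^ ((n : ℝ) / (n + p)) := fun u =>
    Real.rpow_nonneg (mul_nonneg (hf0 u) (hGpos u).le) _
  have hB0 : ∀ u, 0 ≤ G u ^ (-(n : ℝ) / (n + p)) := fun u => Real.rpow_nonneg (hGpos u).le _
  have hmA : MemLp (fun u => (f u * G u) ^ ((n : ℝ) / (n + p)))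
      (ENNReal.ofReal (((n : ℝ) + p) / n)) (sphereProb n) := by
    rw [← integrable_norm_rpow_iff (hfG.1.aemeasurable.pow_const _).aestronglyMeasurable
      (by simpa using by positivity) ENNReal.ofReal_ne_top, ENNReal.toReal_ofReal (by positivity)]
    simpa only [Real.norm_of_nonneg (hA0 _), hA] using hfG
  have hmB : MemLp (fun u => G u ^ (-(n : ℝ) / (n + p)))
      (ENNReal.ofReal (((n : ℝ) + p) / p)) (sphereProb n) := by
    have hc : Continuous fun u => G u ^ (-(n : ℝ) / (n + p)) :=
      hG.rpow_const fun u => Or.inl (hGpos u).ne'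
    exact hc.memLp_of_hasCompactSupport (HasCompactSupport.of_compactSpace _)
  have h := integral_mul_le_Lp_mul_Lq_of_nonneg hconj (Filter.Eventually.of_forall hA0)
    (Filter.Eventually.of_forall hB0) hmA hmB
  simp only [hA, hB] at h
  have hAB : ∀ u, (f u * G u) ^ ((n : ℝ) / (n + p)) * G u ^ (-(n : ℝ) / (n + p))
      = f u ^ ((n : ℝ) / (n + p)) := fun u => by
    rw [Real.mul_rpow (hf0 u) (hGpos u).le, mul_assoc, ← Real.rpow_add (hGpos u), neg_div,
      add_neg_cancel, Real.rpow_zero, mul_one]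
  simp only [hAB] at h
  have hI1 : 0 ≤ ∫ u, f u * G u ∂(sphereProb n) :=
    integral_nonneg fun u => mul_nonneg (hf0 u) (hGpos u).le
  have hI2 : 0 ≤ ∫ u, G u ^ (-(n : ℝ) / p) ∂(sphereProb n) :=
    integral_nonneg fun u => Real.rpow_nonneg (hGpos u).le _
  refine (Real.rpow_le_rpow (integral_nonneg fun u => Real.rpow_nonneg (hf0 u) _) h
    (by positivity : 0 ≤ ((n : ℝ) + p) / n)).trans_eq ?_
  rw [Real.mul_rpow (Real.rpow_nonneg hI1 _) (Real.rpow_nonneg hI2 _), ← Real.rpow_mul hI1,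
    ← Real.rpow_mul hI2, show 1 / (((n : ℝ) + p) / n) * ((n + p) / n) = 1 by field_simp,
    Real.rpow_one]
  congr 2; field_simp

/-! ### Fubini for the sine kernel -/

lemma integral_mul_sineTrans_comm (hn : 1 ≤ n) {p : ℝ} (hp : 0 ≤ p)
    {f g : sphere (0 : EuclideanSpace ℝ (Fin n)) 1 → ℝ}
    (hf : Integrable f (sphereProb n)) (hg : Integrable g (sphereProb n)) :
    ∫ u, f u * sineTrans p g u ∂(sphereProb n) = ∫ v, g v * sineTrans p f v ∂(sphereProb n) := by
  have := isProbabilityMeasure_sphereProb hn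
  simp only [sineTrans, ← integral_const_mul]
  rw [integral_integral_swap]
  · refine integral_congr_ae (Filter.Eventually.of_forall fun v => ?_)
    refine integral_congr_ae (Filter.Eventually.of_forall fun u => ?_)
    simp only
    rw [sinePair_comm]; ring
  · have hc : Continuous fun q : sphere (0 : EuclideanSpace ℝ (Fin n)) 1 ×
        sphere (0 : EuclideanSpace ℝ (Fin n)) 1 =>
        sinePair (q.1 : EuclideanSpace ℝ (Fin n)) q.2 ^ p :=
      (continuous_sinePair_rpow hp).comp
        (f := fun q : sphere (0 : EuclideanSpace ℝ (Fin n)) 1 ×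
          sphere (0 : EuclideanSpace ℝ (Fin n)) 1 =>
          ((q.1 : EuclideanSpace ℝ (Fin n)), (q.2 : EuclideanSpace ℝ (Fin n)))) (by fun_prop)
    refine ((hf.mul_prod hg).bdd_mul (c := 1) hc.aestronglyMeasurable
      (Filter.Eventually.of_forall fun q => ?_)).congr (Filter.Eventually.of_forall fun q => ?_)
    · rw [Real.norm_of_nonneg (Real.rpow_nonneg (sinePair_nonneg _ _) _)]
      simpa using sinePair_rpow_le hp (q.1 : EuclideanSpace ℝ (Fin n)) q.2
    · simp only [Function.uncurry]; ring

end

section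
variable {n : ℕ}

/-! ### The constant -/

lemma sphereArea_eq (hn : 1 ≤ n) : sphereArea n = n * omegaVol n := by
  have : Nonempty (Fin n) := ⟨⟨0, hn⟩⟩
  rw [sphereArea, Measure.toSphere_real_apply_univ, measureReal_def, EuclideanSpace.volume_ball,
    omegaVol, finrank_euclideanSpace_fin]
  have h1 : √Real.pi ^ n = Real.pi ^ ((n : ℝ) / 2) := by
    rw [Real.sqrt_eq_rpow, ← Real.rpow_natCast, ← Real.rpow_mul Real.pi_pos.le]
    congr 1; ring
  have h2 : 0 < Real.Gamma ((n : ℝ) / 2 + 1) := Real.Gamma_pos_of_pos (by positivity)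
  simp only [ENNReal.ofReal_one, one_pow, one_mul, Fintype.card_fin]
  rw [ENNReal.toReal_ofReal (by positivity), h1, add_comm (1 : ℝ)]

lemma lintegral_Ioi_gauss {a : ℝ} (ha : 0 < a) :
    ∫⁻ r in Ioi (0 : ℝ), ENNReal.ofReal (r ^ (a - 1) * Real.exp (-r ^ 2))
      = ENNReal.ofReal (Real.Gamma (a / 2) / 2) := by
  have h1 := integrableOn_rpow_mul_exp_neg_rpow (p := 2) (s := a - 1) (by linarith) two_pos
  have h2 := integral_rpow_mul_exp_neg_rpow (p := 2) (q := a - 1) two_pos (by linarith)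
  simp only [Real.rpow_two] at h1 h2
  rw [← ofReal_integral_eq_lintegral_ofReal h1, h2]
  · congr 1; rw [sub_add_cancel]; ring
  · filter_upwards [ae_restrict_mem measurableSet_Ioi] with r hr
    exact mul_nonneg (Real.rpow_nonneg (le_of_lt hr) _) (Real.exp_pos _).le

lemma measurable_gauss {h : EuclideanSpace ℝ (Fin n) → ℝ} (hc : Continuous h) :
    Measurable fun x => ENNReal.ofReal (h x * Real.exp (-‖x‖ ^ 2)) := by
  have : Continuous fun x => h x * Real.exp (-‖x‖ ^ 2) := by fun_prop
  exact this.measurable.ennreal_ofReal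

/-- The Gaussian integral of a nonnegative `p`-homogeneous function. -/
lemma lintegral_gauss_homogeneous (hn : 1 ≤ n) {p : ℝ} (hp : 0 ≤ p)
    {h : EuclideanSpace ℝ (Fin n) → ℝ} (hc : Continuous h) (h0 : ∀ x, 0 ≤ h x)
    (hhom : ∀ r : ℝ, 0 < r → ∀ x, h (r • x) = r ^ p * h x) :
    ∫⁻ x, ENNReal.ofReal (h x * Real.exp (-‖x‖ ^ 2)) = ENNReal.ofReal (sphereArea n *
      (∫ u : sphere (0 : EuclideanSpace ℝ (Fin n)) 1, h u ∂(sphereProb n)) *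
        (Real.Gamma (((n : ℝ) + p) / 2) / 2)) := by
  have hn0 : (0 : ℝ) < n := by exact_mod_cast hn
  rw [lintegral_polar hn (measurable_gauss hc)]
  have h1 : ∀ u : sphere (0 : EuclideanSpace ℝ (Fin n)) 1,
      ∫⁻ r in Ioi (0 : ℝ), ENNReal.ofReal (r ^ (n - 1)) *
        ENNReal.ofReal (h (r • (u : EuclideanSpace ℝ (Fin n))) *
          Real.exp (-‖r • (u : EuclideanSpace ℝ (Fin n))‖ ^ 2))
      = ENNReal.ofReal (h u) * ENNReal.ofReal (Real.Gamma (((n : ℝ) + p) / 2) / 2) := by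
    intro u
    rw [← lintegral_Ioi_gauss (by positivity), ← lintegral_const_mul _ (by fun_prop)]
    refine setLIntegral_congr_fun measurableSet_Ioi fun r hr => ?_
    have hr : 0 < r := hr
    rw [← ENNReal.ofReal_mul (by positivity), ← ENNReal.ofReal_mul (h0 _), hhom r hr, norm_smul,
      norm_eq_of_mem_sphere, mul_one, Real.norm_of_nonneg hr.le]
    congr 1
    have : r ^ ((n : ℝ) + p - 1) = r ^ (n - 1) * r ^ p := by
      rw [← Real.rpow_natCast, ← Real.rpow_add hr, Nat.cast_sub hn]
      congr 1; push_cast; ring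
    rw [this]; ring
  have hc' : Continuous fun u : sphere (0 : EuclideanSpace ℝ (Fin n)) 1 =>
    h (u : EuclideanSpace ℝ (Fin n)) := hc.comp continuous_subtype_val
  rw [lintegral_congr h1, lintegral_mul_const _ hc'.measurable.ennreal_ofReal,
    lintegral_toSphere hn (integrable_of_continuous hn hc') (fun u => h0 _),
    ← ENNReal.ofReal_mul (mul_nonneg (sphereArea_pos hn).le (integral_nonneg fun u => h0 _))]

lemma lintegral_cons {m : ℕ} {F : EuclideanSpace ℝ (Fin (m + 1)) → ℝ≥0∞} (hF : Measurable F) :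
    ∫⁻ x, F x = ∫⁻ t : ℝ, ∫⁻ y : EuclideanSpace ℝ (Fin m),
      F (WithLp.toLp 2 (Fin.cons t (WithLp.ofLp y) : Fin (m + 1) → ℝ)) := by
  have hF1 : Measurable fun w : Fin (m + 1) → ℝ => F (WithLp.toLp 2 w) :=
    hF.comp (PiLp.volume_preserving_toLp (Fin (m + 1))).measurable
  have hmp := (volume_preserving_piFinSuccAbove (fun _ : Fin (m + 1) => ℝ) 0).symm
  rw [← (PiLp.volume_preserving_toLp (Fin (m + 1))).lintegral_comp hF, ← hmp.lintegral_comp hF1,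
    Measure.volume_eq_prod,
    lintegral_prod (fun a : ℝ × (Fin m → ℝ) => F (WithLp.toLp 2
      ((MeasurableEquiv.piFinSuccAbove (fun _ : Fin (m + 1) => ℝ) 0).symm a)))
      (hF1.comp (MeasurableEquiv.measurable _)).aemeasurable]
  refine lintegral_congr fun t => ?_
  have hm2 : Measurable fun z : Fin m → ℝ => F (WithLp.toLp 2 (Fin.cons t z : Fin (m + 1) → ℝ)) := by
    have := hF1.comp ((MeasurableEquiv.piFinSuccAbove (fun _ : Fin (m + 1) => ℝ) 0).symm.measurable.comp
      (measurable_prodMk_left (x := t)))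
    simpa [Function.comp_def, MeasurableEquiv.piFinSuccAbove, Fin.insertNthEquiv] using this
  rw [(PiLp.volume_preserving_ofLp (Fin m)).lintegral_comp hm2]
  refine lintegral_congr fun z => ?_
  simp [MeasurableEquiv.piFinSuccAbove, Fin.insertNthEquiv]

lemma sinePair_cons_single {m : ℕ} (t : ℝ) (y : EuclideanSpace ℝ (Fin m)) :
    sinePair (WithLp.toLp 2 (Fin.cons t (WithLp.ofLp y) : Fin (m + 1) → ℝ))
      (EuclideanSpace.single 0 1) = ‖y‖ := by
  rw [sinePair, EuclideanSpace.norm_sq_eq, EuclideanSpace.norm_eq y]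
  simp [EuclideanSpace.inner_single_right, Fin.sum_univ_succ]

/-- Integrating `[x, e₀]^p e^{-|x|²}` over `ℝ^{m+1}` in polar coordinates gives the left hand side;
splitting off the coordinate `x₀` leaves `√π` times the integral of `|y|^p e^{-|y|²}` over `ℝ^m`,
which gives the right hand side. -/
lemma sineTrans_one_single {m : ℕ} (hm : 1 ≤ m) {p : ℝ} (hp : 0 ≤ p) :
    sphereArea (m + 1) * sineTrans p (fun _ => 1) (EuclideanSpace.single (0 : Fin (m + 1)) 1) *
      (Real.Gamma ((((m + 1 : ℕ) : ℝ) + p) / 2) / 2)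
    = √Real.pi * (sphereArea m * (Real.Gamma (((m : ℝ) + p) / 2) / 2)) := by
  have := isProbabilityMeasure_sphereProb hm
  set e : EuclideanSpace ℝ (Fin (m + 1)) := EuclideanSpace.single (0 : Fin (m + 1)) 1
  have hcs : Continuous fun x : EuclideanSpace ℝ (Fin (m + 1)) => sinePair x e ^ p :=
    (continuous_sinePair_rpow hp).comp (f := fun x => (x, e)) (by fun_prop)
  have h1 := lintegral_gauss_homogeneous (n := m + 1) (by omega) hp (h := fun x => sinePair x e ^ p)
    hcs (fun x => Real.rpow_nonneg (sinePair_nonneg _ _) _) (fun r hr x => by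
      rw [sinePair_smul_left, abs_of_pos hr, Real.mul_rpow hr.le (sinePair_nonneg _ _)])
  have h2 := lintegral_gauss_homogeneous (n := m) hm hp (h := fun x => ‖x‖ ^ p)
    (continuous_norm.rpow_const fun _ => Or.inr hp) (fun x => Real.rpow_nonneg (norm_nonneg _) _)
    (fun r hr x => by
      rw [norm_smul, Real.norm_of_nonneg hr.le, Real.mul_rpow hr.le (norm_nonneg _)])
  simp only [norm_eq_of_mem_sphere, Real.one_rpow, integral_const, probReal_univ, smul_eq_mul,
    mul_one] at h2
  have h3 : ∫⁻ t : ℝ, ENNReal.ofReal (Real.exp (-t ^ 2)) = ENNReal.ofReal √Real.pi := by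
    have hi := integrable_exp_neg_mul_sq (b := 1) one_pos
    have hg := integral_gaussian 1
    simp only [neg_mul, one_mul, div_one] at hi hg
    rw [← ofReal_integral_eq_lintegral_ofReal hi
      (Filter.Eventually.of_forall fun t => (Real.exp_pos _).le), hg]
  rw [lintegral_cons (measurable_gauss hcs)] at h1
  have h4 : ∀ t : ℝ, ∀ y : EuclideanSpace ℝ (Fin m), ENNReal.ofReal (sinePair
      (WithLp.toLp 2 (Fin.cons t (WithLp.ofLp y) : Fin (m + 1) → ℝ)) e ^ p *
        Real.exp (-‖(WithLp.toLp 2 (Fin.cons t (WithLp.ofLp y) : Fin (m + 1) → ℝ) :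
          EuclideanSpace ℝ (Fin (m + 1)))‖ ^ 2))
      = ENNReal.ofReal (Real.exp (-t ^ 2)) * ENNReal.ofReal (‖y‖ ^ p * Real.exp (-‖y‖ ^ 2)) := by
    intro t y
    rw [sinePair_cons_single, ← ENNReal.ofReal_mul (Real.exp_pos _).le]
    have : ‖(WithLp.toLp 2 (Fin.cons t (WithLp.ofLp y) : Fin (m + 1) → ℝ) :
          EuclideanSpace ℝ (Fin (m + 1)))‖ ^ 2 = t ^ 2 + ‖y‖ ^ 2 := by
      rw [EuclideanSpace.norm_sq_eq, EuclideanSpace.norm_sq_eq]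
      simp [Fin.sum_univ_succ]
    rw [this, neg_add, Real.exp_add]
    congr 1; ring
  simp only [h4] at h1
  have hA := (sphereArea_pos hm).le
  have hA' := (sphereArea_pos (n := m + 1) (by omega)).le
  have hG1 : 0 < Real.Gamma (((m : ℝ) + p) / 2) := Real.Gamma_pos_of_pos (by positivity)
  have hG2 : 0 < Real.Gamma ((((m + 1 : ℕ) : ℝ) + p) / 2) := Real.Gamma_pos_of_pos (by positivity)
  have hmeas : Measurable fun y : EuclideanSpace ℝ (Fin m) =>
      ENNReal.ofReal (‖y‖ ^ p * Real.exp (-‖y‖ ^ 2)) := by fun_prop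
  simp only [lintegral_const_mul _ hmeas] at h1
  rw [lintegral_mul_const _ (by fun_prop), h2, h3, ← ENNReal.ofReal_mul (Real.sqrt_nonneg _),
    ENNReal.ofReal_eq_ofReal_iff (by positivity) (mul_nonneg (mul_nonneg hA'
      (integral_nonneg fun u => Real.rpow_nonneg (sinePair_nonneg _ _) _)) (by positivity))] at h1
  rw [h1, sineTrans]
  simp only [mul_one, sinePair_comm e]

/-- By rotation invariance the transform of the constant `1` depends only on `‖v‖`; the invariance
is read off from Gaussian integrals over the whole space. -/
lemma sineTrans_one_eq (hn : 1 ≤ n) {p : ℝ} (hp : 0 ≤ p) {v w : EuclideanSpace ℝ (Fin n)}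
    (h : ‖v‖ = ‖w‖) : sineTrans p (fun _ => 1) v = sineTrans p (fun _ => 1) w := by
  have hcs : ∀ e, Continuous fun x : EuclideanSpace ℝ (Fin n) => sinePair x e ^ p := fun e =>
    (continuous_sinePair_rpow hp).comp (f := fun x => (x, e)) (by fun_prop)
  have h1 := fun e => lintegral_gauss_homogeneous (n := n) hn hp (h := fun x => sinePair x e ^ p)
    (hcs e) (fun x => Real.rpow_nonneg (sinePair_nonneg _ _) _) (fun r hr x => by
      rw [sinePair_smul_left, abs_of_pos hr, Real.mul_rpow hr.le (sinePair_nonneg _ _)])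
  let T := (ℝ ∙ (v - w))ᗮ.reflection
  have hT : T v = w := Submodule.reflection_sub h
  have h2 : ∫⁻ x, ENNReal.ofReal (sinePair x w ^ p * Real.exp (-‖x‖ ^ 2))
      = ∫⁻ x, ENNReal.ofReal (sinePair x v ^ p * Real.exp (-‖x‖ ^ 2)) := by
    rw [← T.measurePreserving.lintegral_comp (measurable_gauss (hcs w))]
    refine lintegral_congr fun x => ?_
    rw [← hT, sinePair_map, T.norm_map]
  have hA := sphereArea_pos hn
  have hG1 : 0 < Real.Gamma (((n : ℝ) + p) / 2) := Real.Gamma_pos_of_pos (by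
    have : (0 : ℝ) < n := by exact_mod_cast hn
    positivity)
  have hI : ∀ e : EuclideanSpace ℝ (Fin n), 0 ≤ ∫ u : sphere (0 : EuclideanSpace ℝ (Fin n)) 1,
      sinePair (u : EuclideanSpace ℝ (Fin n)) e ^ p ∂(sphereProb n) := fun e =>
    integral_nonneg fun u => Real.rpow_nonneg (sinePair_nonneg _ _) _
  rw [h1, h1, ENNReal.ofReal_eq_ofReal_iff (by have := hI w; positivity)
    (by have := hI v; positivity)] at h2
  have h3 := mul_left_cancel₀ hA.ne' (mul_right_cancel₀ (by positivity) h2)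
  simp only [sineTrans, mul_one, sinePair_comm v, sinePair_comm w, h3]

lemma sineTrans_one (hn : 2 ≤ n) {p : ℝ} (hp : 1 ≤ p)
    (v : sphere (0 : EuclideanSpace ℝ (Fin n)) 1) :
    sineTrans p (fun _ => 1) (v : EuclideanSpace ℝ (Fin n)) =
      ((n : ℝ) - 1) * omegaVol ((n : ℝ) - 1) * omegaVol ((n : ℝ) + p - 2) /
        ((n : ℝ) * omegaVol (n : ℝ) * omegaVol ((n : ℝ) + p - 3)) := by
  obtain ⟨m, rfl⟩ : ∃ m, n = m + 1 := ⟨n - 1, by omega⟩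
  have hm : 1 ≤ m := by omega
  have hm0 : (1 : ℝ) ≤ m := by exact_mod_cast hm
  have hp0 : 0 ≤ p := by linarith
  rw [sineTrans_one_eq (by omega) hp0 (w := EuclideanSpace.single (0 : Fin (m + 1)) 1)
    (by rw [norm_eq_of_mem_sphere]; simp)]
  have h := sineTrans_one_single hm hp0
  rw [sphereArea_eq hm, sphereArea_eq (by omega)] at h
  set c := sineTrans p (fun _ => 1) (EuclideanSpace.single (0 : Fin (m + 1)) 1)
  have ho : ∀ q : ℝ, -2 < q → 0 < omegaVol q := fun q hq =>
    div_pos (Real.rpow_pos_of_pos Real.pi_pos _) (Real.Gamma_pos_of_pos (by linarith))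
  have hG2 : 0 < Real.Gamma ((((m + 1 : ℕ) : ℝ) + p) / 2) := Real.Gamma_pos_of_pos (by positivity)
  have hratio : omegaVol (((m + 1 : ℕ) : ℝ) + p - 2) * Real.Gamma ((((m + 1 : ℕ) : ℝ) + p) / 2)
      = √Real.pi * omegaVol (((m + 1 : ℕ) : ℝ) + p - 3) * Real.Gamma (((m : ℝ) + p) / 2) := by
    have e1 : 1 + (((m + 1 : ℕ) : ℝ) + p - 2) / 2 = (((m + 1 : ℕ) : ℝ) + p) / 2 := by
      push_cast; ring
    have e2 : 1 + (((m + 1 : ℕ) : ℝ) + p - 3) / 2 = ((m : ℝ) + p) / 2 := by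
      push_cast; ring
    have e3 : Real.pi ^ ((((m + 1 : ℕ) : ℝ) + p - 2) / 2)
        = √Real.pi * Real.pi ^ ((((m + 1 : ℕ) : ℝ) + p - 3) / 2) := by
      rw [Real.sqrt_eq_rpow, ← Real.rpow_add Real.pi_pos]; congr 1; ring
    have hG1 : 0 < Real.Gamma (((m : ℝ) + p) / 2) := Real.Gamma_pos_of_pos (by positivity)
    rw [omegaVol, omegaVol, e1, e2, e3]
    field_simp
  have hw := ho (((m + 1 : ℕ) : ℝ) + p - 3) (by push_cast; linarith)
  have hw2 := ho ((m + 1 : ℕ) : ℝ) (by push_cast; linarith)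
  have hN : (0 : ℝ) < ((m + 1 : ℕ) : ℝ) := by positivity
  rw [eq_div_iff (by positivity)]
  rw [show ((m + 1 : ℕ) : ℝ) - 1 = m by push_cast; ring]
  refine mul_right_cancel₀ hG2.ne' ?_
  rw [mul_assoc _ (omegaVol (((m + 1 : ℕ) : ℝ) + p - 2)), hratio]
  linear_combination 2 * omegaVol (((m + 1 : ℕ) : ℝ) + p - 3) * h

end

section
variable {n : ℕ}

/-! ### The comparison for densities -/

/-- The comparison with balls, rewritten in terms of radial functions. Here `K = {G ≤ 1}` and
`L = {F ≤ 1}` for the transforms `G` of `g` and `F` of `G^{-(n+p)/p}`; the numbers `r`, `s` are the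
radii of the balls with the volumes of `K` and `L`. -/
lemma exists_radii (hn : 2 ≤ n) {p : ℝ} (hp : 1 ≤ p)
    {g : sphere (0 : EuclideanSpace ℝ (Fin n)) 1 → ℝ} (hg0 : ∀ u, 0 ≤ g u)
    (hg : Integrable g (sphereProb n)) (hgne : ¬ g =ᵐ[sphereProb n] 0)
    {c : ℝ} (hc : ∀ v : sphere (0 : EuclideanSpace ℝ (Fin n)) 1,
      sineTrans p (fun _ => 1) (v : EuclideanSpace ℝ (Fin n)) = c) :
    ∃ r s : ℝ, 0 ≤ r ∧ 0 < s ∧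
      (∫ u : sphere (0 : EuclideanSpace ℝ (Fin n)) 1,
        sineTrans p g u ^ (-(n : ℝ) / p) ∂(sphereProb n)) = r ^ (n : ℝ) ∧
      (∫ u : sphere (0 : EuclideanSpace ℝ (Fin n)) 1, g u ^ ((n : ℝ) / (n + p))
        ∂(sphereProb n)) ^ (((n : ℝ) + p) / n) ≤ r ^ (n : ℝ) * s ^ p ∧
      c * r ^ ((n : ℝ) + p) * s ^ p ≤ 1 := by
  have hn1 : 1 ≤ n := by omega
  have hp0 : 0 < p := by linarith
  have hn0 : (0 : ℝ) < n := by exact_mod_cast hn1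
  have hprob := isProbabilityMeasure_sphereProb hn1
  have hA := sphereArea_pos hn1
  have hG := sineTrans_pos hn hp0.le hg0 hg hgne
  set ρ := sineRadial p g with hρdef
  have hρc : Continuous ρ := continuous_sineRadial hp0.le hg hG
  have hρ0 : ∀ u, 0 < ρ u := sineRadial_pos hG
  set f1 : sphere (0 : EuclideanSpace ℝ (Fin n)) 1 → ℝ := fun u => ρ u ^ ((n : ℝ) + p) with hf1
  have hf1c : Continuous f1 := hρc.rpow_const fun u => Or.inl (hρ0 u).ne'
  have hf1p : ∀ u, 0 < f1 u := fun u => Real.rpow_pos_of_pos (hρ0 u) _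
  have hf1i := integrable_of_continuous hn1 hf1c
  have hf1ne : ¬ f1 =ᵐ[sphereProb n] 0 := fun h => by
    obtain ⟨u, hu⟩ := h.exists
    exact (hf1p u).ne' hu
  have hF := sineTrans_pos hn hp0.le (fun u => (hf1p u).le) hf1i hf1ne
  set τ := sineRadial p f1 with hτdef
  have hτc : Continuous τ := continuous_sineRadial hp0.le hf1i hF
  have hτ0 : ∀ u, 0 < τ u := sineRadial_pos hF
  have hKc := isCompact_sineBody hp0 hg hG
  have hLc := isCompact_sineBody hp0 hf1i hF
  have hVK := volume_radial hn1 hKc.measurableSet hρc (fun u => (hρ0 u).le)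
    (fun r hr u => mem_sineBody_iff hp0 hG hr u)
  have hVL := volume_radial hn1 hLc.measurableSet hτc (fun u => (hτ0 u).le)
    (fun r hr u => mem_sineBody_iff hp0 hF hr u)
  have hposint : ∀ h : sphere (0 : EuclideanSpace ℝ (Fin n)) 1 → ℝ, Continuous h → (∀ u, 0 < h u) →
      0 < ∫ u, h u ∂(sphereProb n) := by
    intro h hh hpos
    rw [integral_pos_iff_support_of_nonneg (fun u => (hpos u).le) (integrable_of_continuous hn1 hh)]
    rw [show Function.support h = univ from eq_univ_of_forall fun u => (hpos u).ne', measure_univ]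
    exact one_pos
  have hV : 0 < ∫ u, ρ u ^ (n : ℝ) ∂(sphereProb n) :=
    hposint _ (hρc.rpow_const fun u => Or.inl (hρ0 u).ne') fun u => Real.rpow_pos_of_pos (hρ0 u) _
  have hW : 0 < ∫ u, τ u ^ (n : ℝ) ∂(sphereProb n) :=
    hposint _ (hτc.rpow_const fun u => Or.inl (hτ0 u).ne') fun u => Real.rpow_pos_of_pos (hτ0 u) _
  obtain ⟨s, r, hs, hr, hsV, hrV, hle⟩ := exists_ball_sineEnergy_le hp hLc
    (convex_sineBody hp (fun u => (hf1p u).le) hf1i)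
    (by rw [hVL]; exact (ENNReal.ofReal_pos.2 (by positivity)).ne') hKc
    (convex_sineBody hp hg0 hg)
    (by rw [hVK]; exact (ENNReal.ofReal_pos.2 (by positivity)).ne')
  have hball : ∀ t : ℝ, 0 ≤ t → volume (closedBall (0 : EuclideanSpace ℝ (Fin n)) t)
      = ENNReal.ofReal (sphereArea n / n * t ^ (n : ℝ)) := by
    intro t ht
    rw [volume_radial hn1 measurableSet_closedBall (ρ := fun _ => t) continuous_const
      (fun _ => ht) mem_closedBall_radial]
    simp
  have hAn : 0 < sphereArea n / n := by positivity
  have hrn : ∫ u, ρ u ^ (n : ℝ) ∂(sphereProb n) = r ^ (n : ℝ) := by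
    rw [hball r hr, hVK, ENNReal.ofReal_eq_ofReal_iff (by positivity) (by positivity)] at hrV
    exact (mul_left_cancel₀ hAn.ne' hrV).symm
  have hsn : ∫ u, τ u ^ (n : ℝ) ∂(sphereProb n) = s ^ (n : ℝ) := by
    rw [hball s hs, hVL, ENNReal.ofReal_eq_ofReal_iff (by positivity) (by positivity)] at hsV
    exact (mul_left_cancel₀ hAn.ne' hsV).symm
  have hs0 : 0 < s := by
    rcases hs.eq_or_lt with h | h
    · rw [hsn, ← h, Real.zero_rpow hn0.ne'] at hW; exact absurd hW (lt_irrefl _)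
    · exact h
  refine ⟨r, s, hr, hs0, ?_, ?_, ?_⟩
  · rw [← hrn]
    refine integral_congr_ae (Filter.Eventually.of_forall fun u => ?_)
    exact (sineRadial_rpow hG _ u).symm
  · refine (reverse_holder hn1 hp0 hg0 hg ((continuous_sineTrans hp0.le hf1i).comp
      continuous_subtype_val) hF).trans_eq ?_
    -- By Fubini the pairing of `g` with `F` is that of `G` with `G^{-(n+p)/p}`, which is
    -- `∫ G^{-n/p}`.
    have e1 : ∫ u : sphere (0 : EuclideanSpace ℝ (Fin n)) 1, g u * sineTrans p f1 u ∂(sphereProb n)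
        = r ^ (n : ℝ) := by
      rw [integral_mul_sineTrans_comm hn1 hp0.le hg hf1i, ← hrn]
      refine integral_congr_ae (Filter.Eventually.of_forall fun u => ?_)
      simp only [hf1]
      rw [hρdef, sineRadial_rpow hG, sineRadial_rpow hG]
      nth_rewrite 2 [← Real.rpow_one (sineTrans p g u)]
      rw [← Real.rpow_add (hG u)]
      congr 1; field_simp; ring
    have e2 : ∫ u : sphere (0 : EuclideanSpace ℝ (Fin n)) 1,
        sineTrans p f1 u ^ (-(n : ℝ) / p) ∂(sphereProb n) = s ^ (n : ℝ) := by
      rw [← hsn]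
      refine integral_congr_ae (Filter.Eventually.of_forall fun u => ?_)
      exact (sineRadial_rpow hF _ u).symm
    simp only [Function.comp_apply]
    rw [e1, e2, ← Real.rpow_mul hs, mul_div_cancel₀ _ hn0.ne']
  · rw [sineEnergy_radial hn1 hp0.le hKc.measurableSet hρc (fun u => (hρ0 u).le)
      (fun r hr u => mem_sineBody_iff hp0 hG hr u) hLc.measurableSet hτc (fun u => (hτ0 u).le)
      (fun r hr u => mem_sineBody_iff hp0 hF hr u),
      sineEnergy_radial hn1 hp0.le measurableSet_closedBall (ρ := fun _ => r) continuous_const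
      (fun _ => hr) mem_closedBall_radial measurableSet_closedBall (τ := fun _ => s) continuous_const
      (fun _ => hs) mem_closedBall_radial] at hle
    -- The energy of `(K, L)` is the pairing of `F` with `F^{-(n+p)/p}`, up to a constant factor,
    -- hence a multiple of the volume of `L`.
    have e1 : ∫ v : sphere (0 : EuclideanSpace ℝ (Fin n)) 1,
        sineTrans p (fun u => ρ u ^ ((n : ℝ) + p)) v * τ v ^ ((n : ℝ) + p) ∂(sphereProb n)
        = s ^ (n : ℝ) := by
      rw [← hsn]
      refine integral_congr_ae (Filter.Eventually.of_forall fun u => ?_)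
      change sineTrans p f1 u * τ u ^ ((n : ℝ) + p) = τ u ^ (n : ℝ)
      rw [hτdef, sineRadial_rpow hF, sineRadial_rpow hF]
      nth_rewrite 1 [← Real.rpow_one (sineTrans p f1 u)]
      rw [← Real.rpow_add (hF u)]
      congr 1; field_simp; ring
    have e2 : ∀ v : sphere (0 : EuclideanSpace ℝ (Fin n)) 1,
        sineTrans p (fun _ => r ^ ((n : ℝ) + p)) (v : EuclideanSpace ℝ (Fin n))
        = c * r ^ ((n : ℝ) + p) := fun v => by
      rw [← hc v, sineTrans, sineTrans, ← integral_mul_const]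
      simp
    simp only [e2] at hle
    rw [e1, integral_const, probReal_univ, one_smul,
      ENNReal.ofReal_le_ofReal_iff (by positivity)] at hle
    have hle2 := le_of_mul_le_mul_left hle (by positivity)
    rw [Real.rpow_add hs0] at hle2
    have hsp : 0 < s ^ (n : ℝ) := Real.rpow_pos_of_pos hs0 _
    refine le_of_mul_le_mul_left ?_ hsp
    linarith

end

/-- the functional form of the `L_p`-sine inequality on the sphere. -/
theorem lp_sine_functional_inequality {n : ℕ} (hn : 2 ≤ n) {p : ℝ} (hp : 1 ≤ p)
    {f g : sphere (0 : EuclideanSpace ℝ (Fin n)) 1 → ℝ}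
    (hf0 : ∀ u, 0 ≤ f u) (hg0 : ∀ u, 0 ≤ g u)
    (hf : Integrable f (sphereProb n)) (hg : Integrable g (sphereProb n)) :
    ((n : ℝ) - 1) * omegaVol ((n : ℝ) - 1) * omegaVol ((n : ℝ) + p - 2) /
        ((n : ℝ) * omegaVol (n : ℝ) * omegaVol ((n : ℝ) + p - 3)) *
      ((∫ u, f u ^ ((n : ℝ) / ((n : ℝ) + p)) ∂(sphereProb n)) ^ (((n : ℝ) + p) / (n : ℝ)) *
        (∫ u, g u ^ ((n : ℝ) / ((n : ℝ) + p)) ∂(sphereProb n)) ^ (((n : ℝ) + p) / (n : ℝ))) ≤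
    ∫ u : sphere (0 : EuclideanSpace ℝ (Fin n)) 1,
      ∫ v : sphere (0 : EuclideanSpace ℝ (Fin n)) 1,
        sinePair (u : EuclideanSpace ℝ (Fin n)) (v : EuclideanSpace ℝ (Fin n)) ^ p *
          f u * g v ∂(sphereProb n) ∂(sphereProb n) := by
  have hn1 : 1 ≤ n := by omega
  have hp0 : 0 < p := by linarith
  have hn0 : (0 : ℝ) < n := by exact_mod_cast hn1
  have hprob := isProbabilityMeasure_sphereProb hn1
  have hR : (∫ u : sphere (0 : EuclideanSpace ℝ (Fin n)) 1,
      ∫ v : sphere (0 : EuclideanSpace ℝ (Fin n)) 1,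
        sinePair (u : EuclideanSpace ℝ (Fin n)) (v : EuclideanSpace ℝ (Fin n)) ^ p *
          f u * g v ∂(sphereProb n) ∂(sphereProb n))
      = ∫ u : sphere (0 : EuclideanSpace ℝ (Fin n)) 1, f u * sineTrans p g u ∂(sphereProb n) := by
    refine integral_congr_ae (Filter.Eventually.of_forall fun u => ?_)
    simp only [sineTrans]
    rw [← integral_const_mul]
    refine integral_congr_ae (Filter.Eventually.of_forall fun v => ?_)
    simp only; ring
  rw [hR]
  have hI0 : 0 ≤ ∫ u : sphere (0 : EuclideanSpace ℝ (Fin n)) 1,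
      f u * sineTrans p g u ∂(sphereProb n) :=
    integral_nonneg fun u => mul_nonneg (hf0 u) (sineTrans_nonneg hg0 _)
  by_cases hgne : g =ᵐ[sphereProb n] 0
  · have : ∫ u, g u ^ ((n : ℝ) / ((n : ℝ) + p)) ∂(sphereProb n) = 0 := by
      rw [← integral_zero (sphere (0 : EuclideanSpace ℝ (Fin n)) 1) ℝ (μ := sphereProb n)]
      refine integral_congr_ae ?_
      filter_upwards [hgne] with u hu
      rw [hu, Pi.zero_apply, Real.zero_rpow (by positivity)]
    rw [this, Real.zero_rpow (by positivity), mul_zero, mul_zero]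
    exact hI0
  have hc := sineTrans_one hn hp
  set c := ((n : ℝ) - 1) * omegaVol ((n : ℝ) - 1) * omegaVol ((n : ℝ) + p - 2) /
        ((n : ℝ) * omegaVol (n : ℝ) * omegaVol ((n : ℝ) + p - 3))
  obtain ⟨r, s, hr, hs, hrn, hgle, hcle⟩ := exists_radii hn hp hg0 hg hgne hc
  have hfle := reverse_holder hn1 hp0 hf0 hf ((continuous_sineTrans hp0.le hg).comp
    continuous_subtype_val) (sineTrans_pos hn hp0.le hg0 hg hgne)
  simp only [Function.comp_apply] at hfle
  rw [hrn, ← Real.rpow_mul hr, mul_div_cancel₀ _ hn0.ne'] at hfle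
  have hc0 : 0 ≤ c := by
    obtain ⟨u⟩ : Nonempty (sphere (0 : EuclideanSpace ℝ (Fin n)) 1) := by
      by_contra h
      rw [not_nonempty_iff] at h
      have := measure_univ (μ := sphereProb n)
      rw [univ_eq_empty_iff.2 h, measure_empty] at this
      exact zero_ne_one this
    rw [← hc u]; exact sineTrans_nonneg (fun _ => zero_le_one) _
  set I := ∫ u : sphere (0 : EuclideanSpace ℝ (Fin n)) 1, f u * sineTrans p g u ∂(sphereProb n)
  have hrp : r ^ ((n : ℝ) + p) = r ^ (n : ℝ) * r ^ p :=
    Real.rpow_add_of_nonneg hr hn0.le hp0.le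
  calc _ ≤ c * ((I * r ^ p) * (r ^ (n : ℝ) * s ^ p)) := by
        refine mul_le_mul_of_nonneg_left (mul_le_mul hfle hgle ?_ (by positivity)) hc0
        exact Real.rpow_nonneg (integral_nonneg fun u => Real.rpow_nonneg (hg0 u) _) _
    _ = I * (c * r ^ ((n : ℝ) + p) * s ^ p) := by rw [hrp]; ring
    _ ≤ I * 1 := mul_le_mul_of_nonneg_left hcle hI0
    _ = I := mul_one I
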